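/- arXiv:1402.0050 — 2 statements merged into one kernel-verified Lean document; each statement's English description precedes it below -/
import Mathlib

section
/- In the process algebra 𝒢 built from a PCP instance INST: INST has a solution if and only if X ≃ Y, if and only if X ≈ Y. Consequently, for every binary relation R on the processes of 𝒢 with ≃ ⊆ R ⊆ ≈, one has X R Y if and only if INST has a solution. -/
/-!
Every state reachable from `X` or `Y` is, up to structural congruence, a configuration: one
control constant (`Mode`) in parallel with a multiset of sequential threads. `Represents` is a
strong bisimulation between terms and configurations, so both bisimilarities may be studied on
configurations (`BrBisim.transfer`, `WkBisim.transfer`). Two facts are used throughout: every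
thread can be erased silently, and states on a common silent cycle are branching bisimilar.

Suppose `w` is a nonempty solution. In mode `I` the indices and in mode `S` the letters are
available at any time, so mode `I` sees only the letters, and mode `S` only the indices, carried
by a thread; threads with the same visible word are interchangeable (`Obs.br`). Hence
`Z V_x U_w` and `Z V_{xw}` are interchangeable in mode `C` (`Same.brZ`). As `C` can spawn every
`Gv V_y`, the thread `Gv V_x U_w` is harmless there (`ClassC.br`). In mode `D` the label `λ_V`
produces a thread `Z V_x U_w`, which `D` can spawn itself, so `Gv` and `Gv U_w` are
interchangeable (`Good.br`). Therefore `Y` can answer the label `λ_U` of `X` by producing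
`Gv U_w` (`Good.br_XY`).

Conversely, let `X ≈ Y`. The answer of `Y` to `λ_U` must keep a thread `Gv V_x U_w` with `w`
nonempty, since otherwise `λ_V` is lost; erasing everything else leaves
`D ‖ Gv V_x U_w ≈ t` for some `t` silently reachable from `D ‖ Gv` (`exists_Gv`). Playing `λ_D`
on the left yields a state from which `λ_Z` cannot be reached silently, so `t` must get rid of all
constants that can become `Z` (`VSt.restrict`). Playing `λ_V` then leaves `Z V_x U_w` on the
left and a single `Z`, in a thread `Z V_y`, on the right. In modes `I` and `S` the traces of a
thread are subsequences of its visible word, so the letters and the indices agree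
(`Obs.word_eq_of_C`). The indices give `y = xw`, and cancelling the letters of `V_x` shows that
`w` is a solution (`exists_good`). Since branching bisimilarity implies weak bisimilarity, all
the claimed equivalences follow.
-/

/-- The reflexive–transitive closure of the silent (`τ`) transitions of an LTS. -/
def SilentStar {S A : Type*} (tr : S → A → S → Prop) (τ : A) : S → S → Prop :=
  Relation.ReflTransGen (fun p q => tr p τ q)

/-- `R` is a branching bisimulation for the LTS `tr` with silent label `τ`. -/
def IsBranchingBisim {S A : Type*} (tr : S → A → S → Prop) (τ : A)
    (R : S → S → Prop) : Prop :=
  ∀ P Q, R P Q →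
    (∀ ℓ P', tr P ℓ P' →
      (ℓ = τ ∧ R P' Q) ∨
      ∃ Q'' Q', SilentStar tr τ Q Q'' ∧ tr Q'' ℓ Q' ∧ R P Q'' ∧ R P' Q') ∧
    (∀ ℓ Q', tr Q ℓ Q' →
      (ℓ = τ ∧ R P Q') ∨
      ∃ P'' P', SilentStar tr τ P P'' ∧ tr P'' ℓ P' ∧ R P'' Q ∧ R P' Q')

/-- Branching bisimilarity: the union of all branching bisimulations. -/
def BrBisim {S A : Type*} (tr : S → A → S → Prop) (τ : A) (P Q : S) : Prop :=
  ∃ R, IsBranchingBisim tr τ R ∧ R P Q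

/-- The weak step `P ⟹̂ℓ P'`. -/
def WeakStep {S A : Type*} (tr : S → A → S → Prop) (τ : A) (ℓ : A) (P P' : S) : Prop :=
  (ℓ = τ ∧ SilentStar tr τ P P') ∨
  (ℓ ≠ τ ∧ ∃ P₁ P₂, SilentStar tr τ P P₁ ∧ tr P₁ ℓ P₂ ∧ SilentStar tr τ P₂ P')

/-- `R` is a weak bisimulation for the LTS `tr` with silent label `τ`. -/
def IsWeakBisim {S A : Type*} (tr : S → A → S → Prop) (τ : A)
    (R : S → S → Prop) : Prop :=
  ∀ P Q, R P Q →
    (∀ ℓ P', tr P ℓ P' → ∃ Q', WeakStep tr τ ℓ Q Q' ∧ R P' Q') ∧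
    (∀ ℓ Q', tr Q ℓ Q' → ∃ P', WeakStep tr τ ℓ P P' ∧ R P' Q')

/-- Weak bisimilarity: the union of all weak bisimulations. -/
def WkBisim {S A : Type*} (tr : S → A → S → Prop) (τ : A) (P Q : S) : Prop :=
  ∃ R, IsWeakBisim tr τ R ∧ R P Q

/-- The process constants of the process algebra `𝒢` built from a PCP instance
with `n` pairs of words over the alphabet `α`.  `W ω (some i)` stands for
`W(ω,i)` and `W ω none` for `W(ω,0)`. -/
inductive Cst (n : ℕ) (α : Type) : Type where
  | X | Y | Z | I | S | C | C' | D | G | G' | Gu | Gv | Gv'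
  | U : Fin n → Cst n α
  | V : Fin n → Cst n α
  | W : List α → Option (Fin n) → Cst n α

/-- The labels of `𝒢`: `λ_U, λ_V, λ_D, λ_I, λ_S, λ_Z`, the indices `1,…,n`,
the letters of `α`, and the silent label `τ`. -/
inductive Lab (n : ℕ) (α : Type) : Type where
  | lU | lV | lD | lI | lS | lZ | tau
  | idx : Fin n → Lab n α
  | ltr : α → Lab n α

/-- Processes: `ε`, constants, sequential and parallel composition. -/
inductive Proc (n : ℕ) (α : Type) : Type where
  | nil
  | cst : Cst n α → Proc n α
  | seq : Proc n α → Proc n α → Proc n α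
  | par : Proc n α → Proc n α → Proc n α

/-- Shorthand for a constant viewed as a process. -/
def K {n : ℕ} {α : Type} (c : Cst n α) : Proc n α := Proc.cst c

/-- The raw transition rules of `𝒢` (from Fig. 3 of the paper), closed under
the structural rules for sequential (left) and parallel composition. -/
inductive Step {n : ℕ} {α : Type} (u v : Fin n → List α) :
    Proc n α → Lab n α → Proc n α → Prop where
  | xU : Step u v (K .X) .lU (.par (K .D) (K .Gv))
  | xT : Step u v (K .X) .tau (K .D)
  | yT : Step u v (K .Y) .tau (K .D)
  | dT : Step u v (K .D) .tau (.par (K .D) (K .Gu))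
  | dD : Step u v (K .D) .lD (K .C)
  | guT (i : Fin n) : Step u v (K .Gu) .tau (.seq (K .Gu) (K (.U i)))
  | guU (i : Fin n) : Step u v (K .Gu) .lU (.seq (K .Gv) (K (.U i)))
  | guGv' : Step u v (K .Gu) .tau (K .Gv')
  | gv'T (i : Fin n) : Step u v (K .Gv') .tau (.seq (K .Gv') (K (.V i)))
  | gv'Z : Step u v (K .Gv') .tau (K .Z)
  | gvT (i : Fin n) : Step u v (K .Gv) .tau (.seq (K .Gv) (K (.V i)))
  | gvE : Step u v (K .Gv) .tau .nil
  | gvV : Step u v (K .Gv) .lV (K .Z)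
  | zE : Step u v (K .Z) .tau .nil
  | zZ : Step u v (K .Z) .lZ .nil
  | cI : Step u v (K .C) .lI (K .I)
  | cS : Step u v (K .C) .lS (K .S)
  | cG : Step u v (K .C) .tau (.par (K .C) (K .G))
  | cGv : Step u v (K .C) .tau (.par (K .C) (K .Gv))
  | gU (i : Fin n) : Step u v (K .G) .tau (.seq (K .G) (K (.U i)))
  | gV (i : Fin n) : Step u v (K .G) .tau (.seq (K .G) (K (.V i)))
  | gE : Step u v (K .G) .tau .nil
  | iC : Step u v (K .I) .lI (K .C')
  | iI (i : Fin n) : Step u v (K .I) (.idx i) (K .I)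
  | sC : Step u v (K .S) .lS (K .C')
  | sS (a : α) : Step u v (K .S) (.ltr a) (K .S)
  | c'G : Step u v (K .C') .tau (.par (K .C') (K .G'))
  | c'E : Step u v (K .C') .tau .nil
  | g'U (i : Fin n) : Step u v (K .G') .tau (.seq (K .G') (K (.U i)))
  | g'V (i : Fin n) : Step u v (K .G') .tau (.seq (K .G') (K (.V i)))
  | g'W (ω : List α) (k : Option (Fin n)) :
      Step u v (K .G') .tau (.seq (K .G') (K (.W ω k)))
  | g'Gv : Step u v (K .G') .tau (K .Gv)
  | g'Z : Step u v (K .G') .tau (K .Z)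
  | uW (i : Fin n) : Step u v (K (.U i)) .tau (K (.W (u i) (some i)))
  | vW (i : Fin n) : Step u v (K (.V i)) .tau (K (.W (v i) (some i)))
  | wA (a : α) (ω : List α) (k : Option (Fin n)) :
      Step u v (K (.W (a :: ω) k)) (.ltr a) (K (.W ω k))
  | wI (ω : List α) (i : Fin n) :
      Step u v (K (.W ω (some i))) (.idx i) (K (.W ω none))
  | wTa (a : α) (ω : List α) (k : Option (Fin n)) :
      Step u v (K (.W (a :: ω) k)) .tau (K (.W ω k))
  | wTi (ω : List α) (i : Fin n) :
      Step u v (K (.W ω (some i))) .tau (K (.W ω none))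
  | wE : Step u v (K (.W [] none)) .tau .nil
  | seqL {P ℓ P'} (Q) : Step u v P ℓ P' → Step u v (.seq P Q) ℓ (.seq P' Q)
  | parL {P ℓ P'} (Q) : Step u v P ℓ P' → Step u v (.par P Q) ℓ (.par P' Q)
  | parR {Q ℓ Q'} (P) : Step u v Q ℓ Q' → Step u v (.par P Q) ℓ (.par P Q')

/-- Structural congruence: sequential composition is associative, parallel
composition is associative and commutative, and `ε` is a unit for both. -/
inductive SC {n : ℕ} {α : Type} : Proc n α → Proc n α → Prop where
  | refl (P) : SC P P
  | symm {P Q} : SC P Q → SC Q P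
  | trans {P Q R} : SC P Q → SC Q R → SC P R
  | seqCong {P P' Q Q'} : SC P P' → SC Q Q' → SC (.seq P Q) (.seq P' Q')
  | parCong {P P' Q Q'} : SC P P' → SC Q Q' → SC (.par P Q) (.par P' Q')
  | seqAssoc (P Q R) : SC (.seq (.seq P Q) R) (.seq P (.seq Q R))
  | parAssoc (P Q R) : SC (.par (.par P Q) R) (.par P (.par Q R))
  | parComm (P Q) : SC (.par P Q) (.par Q P)
  | seqNilL (P) : SC (.seq .nil P) P
  | seqNilR (P) : SC (.seq P .nil) P
  | parNil (P) : SC (.par .nil P) P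

/-- The transition relation of `𝒢`: the raw steps taken up to structural
congruence of processes. -/
def GTrans {n : ℕ} {α : Type} (u v : Fin n → List α) :
    Proc n α → Lab n α → Proc n α → Prop :=
  fun P ℓ Q => ∃ P' Q', SC P P' ∧ Step u v P' ℓ Q' ∧ SC Q' Q

/-- Sequential composition of a list of constants (`ε` for the empty list). -/
def seqComp {n : ℕ} {α : Type} (l : List (Cst n α)) : Proc n α :=
  l.foldr (fun c P => .seq (.cst c) P) .nil

/-- `c` is one of the constants `U₁,…,Uₙ,V₁,…,Vₙ`. -/
def IsUV {n : ℕ} {α : Type} (c : Cst n α) : Prop :=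
  (∃ i, c = Cst.U i) ∨ (∃ i, c = Cst.V i)

/-- `c` is a `W`-constant of `𝒢`, i.e. `W(ω,i)` or `W(ω,0)` with `ω` a suffix
of some `uᵢ` or `vᵢ`. -/
def IsW {n : ℕ} {α : Type} (u v : Fin n → List α) (c : Cst n α) : Prop :=
  ∃ ω k, c = Cst.W ω k ∧ ∃ i, (ω <:+ u i ∨ ω <:+ v i)

/-- `c` is a `U`-, `V`- or `W`-constant of `𝒢`. -/
def IsUVW {n : ℕ} {α : Type} (u v : Fin n → List α) (c : Cst n α) : Prop :=
  IsUV c ∨ IsW u v c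

/-- The PCP instance `(u₁,v₁),…,(uₙ,vₙ)` has a solution. -/
def HasSolution {n : ℕ} {α : Type} (u v : Fin n → List α) : Prop :=
  ∃ is : List (Fin n), is ≠ [] ∧ (is.map u).flatten = (is.map v).flatten


open Relation

/-! ### Normal forms of processes -/

/-- The control part of a reachable process: the unique top-level constant among
`X, Y, D, C, I, S, C'`, written `F` for `C'`, with `E` for the terminated control. -/
inductive Mode where
  | X | Y | D | C | I | S | F | E

/-- The control constant as a multiset of (at most one) sequential threads. -/
def Mode.den {n : ℕ} {α : Type} : Mode → Multiset (List (Cst n α))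
  | .X => {[.X]} | .Y => {[.Y]} | .D => {[.D]} | .C => {[.C]}
  | .I => {[.I]} | .S => {[.S]} | .F => {[.C']} | .E => 0

/-- Control transitions `m --ℓ--> m' ‖ q`, where the pool `q` of threads is spawned. -/
inductive MStep {n : ℕ} {α : Type} :
    Mode → Lab n α → Mode → Multiset (List (Cst n α)) → Prop where
  | xU : MStep .X .lU .D {[.Gv]}
  | xT : MStep .X .tau .D 0
  | yT : MStep .Y .tau .D 0
  | dT : MStep .D .tau .D {[.Gu]}
  | dD : MStep .D .lD .C 0
  | cI : MStep .C .lI .I 0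
  | cS : MStep .C .lS .S 0
  | cG : MStep .C .tau .C {[.G]}
  | cGv : MStep .C .tau .C {[.Gv]}
  | iC : MStep .I .lI .F 0
  | iI (i : Fin n) : MStep .I (.idx i) .I 0
  | sC : MStep .S .lS .F 0
  | sS (a : α) : MStep .S (.ltr a) .S 0
  | fG : MStep .F .tau .F {[.G']}
  | fE : MStep .F .tau .E 0

/-- Transitions of a constant at the head of a sequential thread. -/
inductive TStep {n : ℕ} {α : Type} (u v : Fin n → List α) :
    Cst n α → Lab n α → List (Cst n α) → Prop where
  | guT (i : Fin n) : TStep u v .Gu .tau [.Gu, .U i]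
  | guU (i : Fin n) : TStep u v .Gu .lU [.Gv, .U i]
  | guGv' : TStep u v .Gu .tau [.Gv']
  | gv'T (i : Fin n) : TStep u v .Gv' .tau [.Gv', .V i]
  | gv'Z : TStep u v .Gv' .tau [.Z]
  | gvT (i : Fin n) : TStep u v .Gv .tau [.Gv, .V i]
  | gvE : TStep u v .Gv .tau []
  | gvV : TStep u v .Gv .lV [.Z]
  | zE : TStep u v .Z .tau []
  | zZ : TStep u v .Z .lZ []
  | gU (i : Fin n) : TStep u v .G .tau [.G, .U i]
  | gV (i : Fin n) : TStep u v .G .tau [.G, .V i]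
  | gE : TStep u v .G .tau []
  | g'U (i : Fin n) : TStep u v .G' .tau [.G', .U i]
  | g'V (i : Fin n) : TStep u v .G' .tau [.G', .V i]
  | g'W (ω : List α) (k : Option (Fin n)) : TStep u v .G' .tau [.G', .W ω k]
  | g'Gv : TStep u v .G' .tau [.Gv]
  | g'Z : TStep u v .G' .tau [.Z]
  | uW (i : Fin n) : TStep u v (.U i) .tau [.W (u i) (some i)]
  | vW (i : Fin n) : TStep u v (.V i) .tau [.W (v i) (some i)]
  | wA (a : α) (ω : List α) (k : Option (Fin n)) :
      TStep u v (.W (a :: ω) k) (.ltr a) [.W ω k]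
  | wI (ω : List α) (i : Fin n) : TStep u v (.W ω (some i)) (.idx i) [.W ω none]
  | wTa (a : α) (ω : List α) (k : Option (Fin n)) :
      TStep u v (.W (a :: ω) k) .tau [.W ω k]
  | wTi (ω : List α) (i : Fin n) : TStep u v (.W ω (some i)) .tau [.W ω none]
  | wE : TStep u v (.W [] none) .tau []

/-- The pool consisting of one thread; the empty thread is dropped, as `ε` is a unit. -/
def tm {β : Type} : List β → Multiset (List β)
  | [] => 0
  | c :: l => {c :: l}

@[simp] theorem tm_nil {β : Type} : tm ([] : List β) = 0 := rfl
@[simp] theorem tm_cons {β : Type} (c : β) (l) : tm (c :: l) = {c :: l} := rfl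

/-- Configurations: a control constant together with a pool of sequential threads. -/
abbrev Cfg (n : ℕ) (α : Type) := Mode × Multiset (List (Cst n α))

/-- The transition relation on configurations. -/
inductive CStep {n : ℕ} {α : Type} (u v : Fin n → List α) :
    Cfg n α → Lab n α → Cfg n α → Prop where
  | mode {m ℓ m' q} (p) : MStep m ℓ m' q → CStep u v (m, p) ℓ (m', p + q)
  | thr {c ℓ r} (m p γ) : TStep u v c ℓ r →
      CStep u v (m, p + {c :: γ}) ℓ (m, p + tm (r ++ γ))

/-- `c` may occur in a thread, i.e. `c` is not a control constant. -/
def NM {n : ℕ} {α : Type} : Cst n α → Prop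
  | .X | .Y | .D | .C | .I | .S | .C' => False
  | _ => True

/-- `Den P M`: the process `P` is structurally congruent to the parallel composition of
the sequential threads in `M`. Processes such as `(P ‖ Q) R`, which have no such
normal form, denote nothing. -/
def Den {n : ℕ} {α : Type} : Proc n α → Multiset (List (Cst n α)) → Prop
  | .nil, M => M = 0
  | .cst c, M => M = {[c]}
  | .par P Q, M => ∃ A B, Den P A ∧ Den Q B ∧ M = A + B
  | .seq P Q, M => (Den P 0 ∧ Den Q M) ∨ (Den P M ∧ Den Q 0) ∨
      ∃ a b, Den P {a} ∧ Den Q {b} ∧ M = {a ++ b}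

section Normal
variable {n : ℕ} {α : Type} {u v : Fin n → List α}

theorem exists_add_of_mem {β : Type} {x : β} {A : Multiset β} (h : x ∈ A) :
    ∃ B, A = B + {x} := by
  obtain ⟨B, rfl⟩ := Multiset.exists_cons_of_mem h
  exact ⟨B, by rw [add_comm, Multiset.singleton_add]⟩

theorem Den.nil_not_mem {P : Proc n α} : ∀ {M}, Den P M → [] ∉ M := by
  induction P with
  | nil => rintro M rfl; simp
  | cst c => rintro M rfl; simp
  | par P Q ihP ihQ =>
    rintro M ⟨A, B, hA, hB, rfl⟩
    simp [ihP hA, ihQ hB]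
  | seq P Q ihP ihQ =>
    rintro M (⟨_, h⟩ | ⟨h, _⟩ | ⟨a, b, ha, hb, rfl⟩)
    · exact ihQ h
    · exact ihP h
    · have := ihP ha
      simp at this ⊢
      tauto

theorem Den.sc {P Q : Proc n α} (h : SC P Q) : ∀ M, Den P M ↔ Den Q M := by
  induction h with
  | refl P => simp
  | symm _ ih => exact fun M => (ih M).symm
  | trans _ _ ih1 ih2 => exact fun M => (ih1 M).trans (ih2 M)
  | seqCong _ _ ih1 ih2 => intro M; simp only [Den, ih1, ih2]
  | parCong _ _ ih1 ih2 => intro M; simp only [Den, ih1, ih2]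
  | seqAssoc P Q R =>
    intro M
    constructor
    · rintro (⟨h, hR⟩ | ⟨h, hR⟩ | ⟨c, b, h, hR, rfl⟩)
      · rcases h with ⟨h1, h2⟩ | ⟨h1, h2⟩ | ⟨a, b, h1, h2, h⟩
        · exact .inl ⟨h1, .inl ⟨h2, hR⟩⟩
        · exact .inl ⟨h1, .inl ⟨h2, hR⟩⟩
        · simp at h
      · rcases h with ⟨h1, h2⟩ | ⟨h1, h2⟩ | ⟨a, b, h1, h2, rfl⟩
        · exact .inl ⟨h1, .inr (.inl ⟨h2, hR⟩)⟩
        · exact .inr (.inl ⟨h1, .inl ⟨h2, hR⟩⟩)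
        · exact .inr (.inr ⟨a, b, h1, .inr (.inl ⟨h2, hR⟩), rfl⟩)
      · rcases h with ⟨h1, h2⟩ | ⟨h1, h2⟩ | ⟨a, a', h1, h2, h⟩
        · exact .inl ⟨h1, .inr (.inr ⟨c, b, h2, hR, rfl⟩)⟩
        · exact .inr (.inr ⟨c, b, h1, .inl ⟨h2, hR⟩, rfl⟩)
        · obtain rfl : c = a ++ a' := by simpa using h
          exact .inr (.inr ⟨a, a' ++ b, h1, .inr (.inr ⟨a', b, h2, hR, rfl⟩), by simp⟩)
    · rintro (⟨hP, h⟩ | ⟨hP, h⟩ | ⟨a, c, hP, h, rfl⟩)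
      · rcases h with ⟨h1, h2⟩ | ⟨h1, h2⟩ | ⟨a, b, h1, h2, rfl⟩
        · exact .inl ⟨.inl ⟨hP, h1⟩, h2⟩
        · exact .inr (.inl ⟨.inl ⟨hP, h1⟩, h2⟩)
        · exact .inr (.inr ⟨a, b, .inl ⟨hP, h1⟩, h2, rfl⟩)
      · rcases h with ⟨h1, h2⟩ | ⟨h1, h2⟩ | ⟨a, b, h1, h2, h⟩
        · exact .inr (.inl ⟨.inr (.inl ⟨hP, h1⟩), h2⟩)
        · exact .inr (.inl ⟨.inr (.inl ⟨hP, h1⟩), h2⟩)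
        · simp at h
      · rcases h with ⟨h1, h2⟩ | ⟨h1, h2⟩ | ⟨a', b, h1, h2, h⟩
        · exact .inr (.inr ⟨a, c, .inr (.inl ⟨hP, h1⟩), h2, rfl⟩)
        · exact .inr (.inl ⟨.inr (.inr ⟨a, c, hP, h1, rfl⟩), h2⟩)
        · obtain rfl : c = a' ++ b := by simpa using h
          exact .inr (.inr ⟨a ++ a', b, .inr (.inr ⟨a, a', hP, h1, rfl⟩), h2, by simp⟩)
  | parAssoc P Q R =>
    intro M
    constructor
    · rintro ⟨_, C, ⟨A, B, hA, hB, rfl⟩, hC, rfl⟩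
      exact ⟨A, B + C, hA, ⟨B, C, hB, hC, rfl⟩, by rw [add_assoc]⟩
    · rintro ⟨A, _, hA, ⟨B, C, hB, hC, rfl⟩, rfl⟩
      exact ⟨A + B, C, ⟨A, B, hA, hB, rfl⟩, hC, by rw [add_assoc]⟩
  | parComm P Q =>
    intro M
    constructor <;> rintro ⟨A, B, hA, hB, rfl⟩ <;> exact ⟨B, A, hB, hA, add_comm _ _⟩
  | seqNilL P =>
    intro M
    simp only [Den]
    constructor
    · rintro (⟨-, h⟩ | ⟨rfl, h⟩ | ⟨a, b, h, -⟩)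
      · exact h
      · exact h
      · simp at h
    · exact fun h => .inl ⟨trivial, h⟩
  | seqNilR P =>
    intro M
    simp only [Den]
    constructor
    · rintro (⟨h, rfl⟩ | ⟨h, -⟩ | ⟨a, b, -, h, -⟩)
      · exact h
      · exact h
      · simp at h
    · exact fun h => .inr (.inl ⟨h, trivial⟩)
  | parNil P =>
    intro M
    constructor
    · rintro ⟨A, B, rfl, hB, rfl⟩
      simpa using hB
    · exact fun h => ⟨0, M, rfl, h, by simp⟩

theorem Den.seq_tm {P Q : Proc n α} {a b : List (Cst n α)} (hP : Den P (tm a))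
    (hQ : Den Q (tm b)) : Den (.seq P Q) (tm (a ++ b)) := by
  rcases a with _ | ⟨c, a⟩
  · exact .inl ⟨hP, hQ⟩
  · rcases b with _ | ⟨d, b⟩
    · exact .inr (.inl ⟨by simpa using hP, hQ⟩)
    · exact .inr (.inr ⟨_, _, hP, hQ, rfl⟩)

theorem Den.of_seqComp (l : List (Cst n α)) : Den (seqComp l) (tm l) := by
  induction l with
  | nil => rfl
  | cons c l ih => exact Den.seq_tm (P := .cst c) (a := [c]) rfl ih

theorem SC.of_den_zero {P : Proc n α} : Den P 0 → SC P .nil := by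
  induction P with
  | nil => exact fun _ => .refl _
  | cst c => intro h; simp [Den] at h
  | par P Q ihP ihQ =>
    rintro ⟨A, B, hA, hB, h⟩
    obtain ⟨rfl, rfl⟩ : A = 0 ∧ B = 0 := by simpa using h.symm
    exact (SC.parCong (ihP hA) (ihQ hB)).trans (.parNil _)
  | seq P Q ihP ihQ =>
    rintro (⟨h1, h2⟩ | ⟨h1, h2⟩ | ⟨a, b, h1, h2, h⟩)
    · exact (SC.seqCong (ihP h1) (ihQ h2)).trans (.seqNilL _)
    · exact (SC.seqCong (ihP h1) (ihQ h2)).trans (.seqNilL _)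
    · simp at h

theorem SC.seqComp_append (a b : List (Cst n α)) :
    SC (.seq (seqComp a) (seqComp b)) (seqComp (a ++ b)) := by
  induction a with
  | nil => exact .seqNilL _
  | cons c a ih => exact (SC.seqAssoc _ _ _).trans (.seqCong (.refl _) ih)

/-- Any thread of the normal form can be exposed by structural congruence. -/
theorem Den.expose {P : Proc n α} : ∀ {θ M}, Den P (M + {θ}) →
    ∃ R, SC P (.par (seqComp θ) R) ∧ Den R M := by
  induction P with
  | nil => intro θ M h; simp [Den] at h
  | cst c =>
    intro θ M h
    obtain ⟨rfl, rfl⟩ : M = 0 ∧ θ = [c] := by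
      have h' : M + {θ} = {[c]} := h
      have hc := congrArg Multiset.card h'
      simp at hc
      subst hc
      simpa using h'
    refine ⟨.nil, ?_, rfl⟩
    exact (SC.symm ((SC.parComm _ _).trans ((SC.parNil _).trans (.seqNilR _))))
  | par P Q ihP ihQ =>
    rintro θ M ⟨A, B, hA, hB, h⟩
    have hm : θ ∈ A + B := by rw [← h]; simp
    rcases Multiset.mem_add.1 hm with hm | hm
    · obtain ⟨A, rfl⟩ := exists_add_of_mem hm
      obtain ⟨R, h1, h2⟩ := ihP hA
      refine ⟨.par R Q, (SC.parCong h1 (.refl _)).trans (.parAssoc _ _ _), _, _, h2, hB, ?_⟩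
      rw [add_right_comm] at h
      simpa using h
    · obtain ⟨B, rfl⟩ := exists_add_of_mem hm
      obtain ⟨R, h1, h2⟩ := ihQ hB
      refine ⟨.par R P, (SC.parComm _ _).trans
        ((SC.parCong h1 (.refl _)).trans (.parAssoc _ _ _)), _, _, h2, hA, ?_⟩
      rw [← add_assoc] at h
      simpa [add_comm] using h
  | seq P Q ihP ihQ =>
    rintro θ M (⟨h1, h2⟩ | ⟨h1, h2⟩ | ⟨a, b, h1, h2, h⟩)
    · obtain ⟨R, h3, h4⟩ := ihQ h2
      exact ⟨R, (SC.seqCong (.of_den_zero h1) h3).trans (.seqNilL _), h4⟩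
    · obtain ⟨R, h3, h4⟩ := ihP h1
      exact ⟨R, (SC.seqCong h3 (.of_den_zero h2)).trans (.seqNilR _), h4⟩
    · obtain ⟨rfl, rfl⟩ : M = 0 ∧ θ = a ++ b := by
        have hc := congrArg Multiset.card h
        simp at hc
        subst hc
        simpa using h
      have key : ∀ {P' : Proc n α} {c}, (∃ R, SC P' (.par (seqComp c) R) ∧ Den R 0) →
          SC P' (seqComp c) := by
        rintro P' c ⟨R, h3, h4⟩
        exact h3.trans ((SC.parComm _ _).trans ((SC.parCong (.of_den_zero h4) (.refl _)).trans
          (.parNil _)))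
      refine ⟨.nil, ?_, rfl⟩
      refine (SC.seqCong (key (ihP (M := 0) (by simpa using h1)))
        (key (ihQ (M := 0) (by simpa using h2)))).trans ?_
      exact (SC.seqComp_append _ _).trans
        ((SC.parNil _).symm.trans (.parComm _ _))

/-- Transitions on multisets of threads in which control constants are not separated. -/
inductive HStep (u v : Fin n → List α) :
    Multiset (List (Cst n α)) → Lab n α → Multiset (List (Cst n α)) → Prop where
  | mode {m ℓ m' q} (p) : MStep m ℓ m' q → HStep u v (m.den + p) ℓ (m'.den + (p + q))
  | thr {c ℓ r} (p γ) : TStep u v c ℓ r → HStep u v (p + {c :: γ}) ℓ (p + tm (r ++ γ))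

theorem HStep.add {M ℓ M'} (h : HStep u v M ℓ M') (N) : HStep u v (M + N) ℓ (M' + N) := by
  rcases h with ⟨p, h⟩ | ⟨p, γ, h⟩
  · have := HStep.mode (u := u) (v := v) (p + N) h
    convert this using 1 <;> abel
  · have := HStep.thr (p + N) γ h
    convert this using 1 <;> abel

/-- Control constants occur only as threads of length one. -/
def WF (M : Multiset (List (Cst n α))) : Prop :=
  ∀ θ ∈ M, (∃ c, θ = [c]) ∨ ∀ c ∈ θ, NM c

theorem TStep.step {c : Cst n α} {ℓ r} (h : TStep u v c ℓ r) :
    ∃ T, Step u v (K c) ℓ T ∧ Den T (tm r) := by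
  have d2 : ∀ a b : Cst n α, Den (.seq (K a) (K b)) (tm [a, b]) := fun a b =>
    Den.seq_tm (a := [a]) (b := [b]) rfl rfl
  cases h
  case guT i => exact ⟨_, .guT i, d2 _ _⟩
  case guU i => exact ⟨_, .guU i, d2 _ _⟩
  case guGv' => exact ⟨_, .guGv', rfl⟩
  case gv'T i => exact ⟨_, .gv'T i, d2 _ _⟩
  case gv'Z => exact ⟨_, .gv'Z, rfl⟩
  case gvT i => exact ⟨_, .gvT i, d2 _ _⟩
  case gvE => exact ⟨_, .gvE, rfl⟩
  case gvV => exact ⟨_, .gvV, rfl⟩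
  case zE => exact ⟨_, .zE, rfl⟩
  case zZ => exact ⟨_, .zZ, rfl⟩
  case gU i => exact ⟨_, .gU i, d2 _ _⟩
  case gV i => exact ⟨_, .gV i, d2 _ _⟩
  case gE => exact ⟨_, .gE, rfl⟩
  case g'U i => exact ⟨_, .g'U i, d2 _ _⟩
  case g'V i => exact ⟨_, .g'V i, d2 _ _⟩
  case g'W ω k => exact ⟨_, .g'W ω k, d2 _ _⟩
  case g'Gv => exact ⟨_, .g'Gv, rfl⟩
  case g'Z => exact ⟨_, .g'Z, rfl⟩
  case uW i => exact ⟨_, .uW i, rfl⟩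
  case vW i => exact ⟨_, .vW i, rfl⟩
  case wA a ω k => exact ⟨_, .wA a ω k, rfl⟩
  case wI ω i => exact ⟨_, .wI ω i, rfl⟩
  case wTa a ω k => exact ⟨_, .wTa a ω k, rfl⟩
  case wTi ω i => exact ⟨_, .wTi ω i, rfl⟩
  case wE => exact ⟨_, .wE, rfl⟩

theorem MStep.step {m m' : Mode} {ℓ q} (h : MStep (n := n) (α := α) m ℓ m' q) :
    ∃ c T, m.den = {[c]} ∧ Step u v (K c) ℓ T ∧ Den T (m'.den + q) := by
  cases h
  case xU => exact ⟨_, _, rfl, .xU, _, _, rfl, rfl, rfl⟩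
  case xT => exact ⟨_, _, rfl, .xT, rfl⟩
  case yT => exact ⟨_, _, rfl, .yT, rfl⟩
  case dT => exact ⟨_, _, rfl, .dT, _, _, rfl, rfl, rfl⟩
  case dD => exact ⟨_, _, rfl, .dD, rfl⟩
  case cI => exact ⟨_, _, rfl, .cI, rfl⟩
  case cS => exact ⟨_, _, rfl, .cS, rfl⟩
  case cG => exact ⟨_, _, rfl, .cG, _, _, rfl, rfl, rfl⟩
  case cGv => exact ⟨_, _, rfl, .cGv, _, _, rfl, rfl, rfl⟩
  case iC => exact ⟨_, _, rfl, .iC, rfl⟩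
  case iI i => exact ⟨_, _, rfl, .iI i, rfl⟩
  case sC => exact ⟨_, _, rfl, .sC, rfl⟩
  case sS a => exact ⟨_, _, rfl, .sS a, rfl⟩
  case fG => exact ⟨_, _, rfl, .c'G, _, _, rfl, rfl, rfl⟩
  case fE => exact ⟨_, _, rfl, .c'E, rfl⟩

theorem HStep.gtrans {M ℓ M'} (h : HStep u v M ℓ M') {P} (hP : Den P M) :
    ∃ Q, GTrans u v P ℓ Q ∧ Den Q M' := by
  rcases h with ⟨p, h⟩ | ⟨p, γ, h⟩
  · obtain ⟨c, T, hc, hs, hT⟩ := h.step (u := u) (v := v)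
    rw [hc, add_comm] at hP
    obtain ⟨R, h1, h2⟩ := hP.expose
    refine ⟨_, ⟨_, _, h1.trans (.parCong (.seqNilR _) (.refl _)), .parL R hs, .refl _⟩,
      _, _, hT, h2, by abel⟩
  · obtain ⟨T, hs, hT⟩ := h.step
    obtain ⟨R, h1, h2⟩ := hP.expose
    refine ⟨_, ⟨_, _, h1, .parL R (.seqL _ hs), .refl _⟩,
      _, _, hT.seq_tm (Den.of_seqComp γ), h2, by abel⟩

theorem HStep.of_mode {m : Mode} {c ℓ m' q M'} (h : MStep m ℓ m' q) (hc : m.den = {[c]})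
    (hM : M' = m'.den + q) : HStep u v {[c]} ℓ M' := by
  have := HStep.mode (u := u) (v := v) 0 h
  simpa [hc, hM] using this

theorem HStep.of_thr {c ℓ r M'} (h : TStep u v c ℓ r) (hM : M' = tm r) :
    HStep u v {[c]} ℓ M' := by
  have := HStep.thr 0 [] h
  simpa [hM] using this

theorem HStep.not_zero {ℓ M'} : ¬ HStep u v 0 ℓ M' := by
  generalize hM : (0 : Multiset (List (Cst n α))) = M
  rintro (⟨p, h⟩ | ⟨p, γ, h⟩)
  · cases h <;> simp [Mode.den] at hM
  · simpa using congrArg Multiset.card hM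

/-- A raw step of a process with a normal form is a step of the normal form. The
restriction `WF` excludes steps leading to processes such as `(P ‖ Q) R`. -/
theorem Step.hstep {P Q : Proc n α} {ℓ} (h : Step u v P ℓ Q) :
    ∀ M, Den P M → WF M → ∃ M', Den Q M' ∧ HStep u v M ℓ M' := by
  have d2 : ∀ a b : Cst n α, Den (.seq (K a) (K b)) (tm [a, b]) := fun a b =>
    Den.seq_tm (a := [a]) (b := [b]) rfl rfl
  have base : ∀ {c : Cst n α} {T ℓ r}, TStep u v c ℓ r → Den T (tm r) →
      ∀ M, Den (K c) M → WF M → ∃ M', Den T M' ∧ HStep u v M ℓ M' := by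
    rintro c T ℓ r h hT M rfl -
    exact ⟨_, hT, .of_thr h rfl⟩
  have baseM : ∀ {c : Cst n α} {T ℓ m m' q}, MStep m ℓ m' q → m.den = {[c]} →
      Den T (m'.den + q) →
      ∀ M, Den (K c) M → WF M → ∃ M', Den T M' ∧ HStep u v M ℓ M' := by
    rintro c T ℓ m m' q h hc hT M rfl -
    exact ⟨_, hT, .of_mode h hc rfl⟩
  induction h with
  | xU => exact baseM .xU rfl ⟨_, _, rfl, rfl, rfl⟩
  | xT => exact baseM .xT rfl rfl
  | yT => exact baseM .yT rfl rfl
  | dT => exact baseM .dT rfl ⟨_, _, rfl, rfl, rfl⟩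
  | dD => exact baseM .dD rfl rfl
  | guT i => exact base (.guT i) (d2 _ _)
  | guU i => exact base (.guU i) (d2 _ _)
  | guGv' => exact base .guGv' rfl
  | gv'T i => exact base (.gv'T i) (d2 _ _)
  | gv'Z => exact base .gv'Z rfl
  | gvT i => exact base (.gvT i) (d2 _ _)
  | gvE => exact base .gvE rfl
  | gvV => exact base .gvV rfl
  | zE => exact base .zE rfl
  | zZ => exact base .zZ rfl
  | cI => exact baseM .cI rfl rfl
  | cS => exact baseM .cS rfl rfl
  | cG => exact baseM .cG rfl ⟨_, _, rfl, rfl, rfl⟩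
  | cGv => exact baseM .cGv rfl ⟨_, _, rfl, rfl, rfl⟩
  | gU i => exact base (.gU i) (d2 _ _)
  | gV i => exact base (.gV i) (d2 _ _)
  | gE => exact base .gE rfl
  | iC => exact baseM .iC rfl rfl
  | iI i => exact baseM (.iI i) rfl rfl
  | sC => exact baseM .sC rfl rfl
  | sS a => exact baseM (.sS a) rfl rfl
  | c'G => exact baseM .fG rfl ⟨_, _, rfl, rfl, rfl⟩
  | c'E => exact baseM .fE rfl rfl
  | g'U i => exact base (.g'U i) (d2 _ _)
  | g'V i => exact base (.g'V i) (d2 _ _)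
  | g'W ω k => exact base (.g'W ω k) (d2 _ _)
  | g'Gv => exact base .g'Gv rfl
  | g'Z => exact base .g'Z rfl
  | uW i => exact base (.uW i) rfl
  | vW i => exact base (.vW i) rfl
  | wA a ω k => exact base (.wA a ω k) rfl
  | wI ω i => exact base (.wI ω i) rfl
  | wTa a ω k => exact base (.wTa a ω k) rfl
  | wTi ω i => exact base (.wTi ω i) rfl
  | wE => exact base .wE rfl
  | seqL Q _ ih =>
    rintro M (⟨h1, h2⟩ | ⟨h1, h2⟩ | ⟨a, b, h1, h2, rfl⟩) hM
    · obtain ⟨M', -, h3⟩ := ih _ h1 (by simp [WF])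
      exact (h3.not_zero).elim
    · obtain ⟨M', h3, h4⟩ := ih _ h1 hM
      exact ⟨M', .inr (.inl ⟨h3, h2⟩), h4⟩
    · have ha : a ≠ [] := by rintro rfl; simpa using h1.nil_not_mem
      have hb : b ≠ [] := by rintro rfl; simpa using h2.nil_not_mem
      have hab : ∀ c ∈ a ++ b, NM c := by
        rcases hM (a ++ b) (by simp) with ⟨c, hc⟩ | h
        · have := congrArg List.length hc
          have := List.length_pos_iff.2 ha
          have := List.length_pos_iff.2 hb
          simp at *
          omega
        · exact h
      obtain ⟨M', h3, h4⟩ := ih _ h1 (by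
        intro θ hθ
        obtain rfl : θ = a := by simpa using hθ
        exact .inr fun c hc => hab c (by simp [hc]))
      generalize hA : ({a} : Multiset (List (Cst n α))) = A at h4
      rcases h4 with ⟨p, h⟩ | @⟨c, _, r, p, γ, h⟩
      · -- a control constant cannot be the head of the thread `a ++ b`
        exfalso
        cases h <;>
        · have hc := congrArg Multiset.card hA
          simp [Mode.den] at hc
          subst hc
          obtain rfl := by simpa [Mode.den] using hA
          exact hab _ List.mem_cons_self
      · have hc := congrArg Multiset.card hA
        simp at hc
        subst hc
        obtain rfl : a = c :: γ := by simpa using hA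
        refine ⟨tm (r ++ (γ ++ b)), ?_, ?_⟩
        · rw [← List.append_assoc]
          refine Den.seq_tm (by simpa using h3) ?_
          obtain ⟨d, b, rfl⟩ := List.exists_cons_of_ne_nil hb
          exact h2
        · simpa using HStep.thr 0 (γ ++ b) h
  | parL Q _ ih =>
    rintro M ⟨A, B, hA, hB, rfl⟩ hM
    obtain ⟨M', h3, h4⟩ := ih _ hA fun θ hθ => hM θ (by simp [hθ])
    exact ⟨M' + B, ⟨_, _, h3, hB, rfl⟩, h4.add B⟩
  | parR P _ ih =>
    rintro M ⟨A, B, hA, hB, rfl⟩ hM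
    obtain ⟨M', h3, h4⟩ := ih _ hB fun θ hθ => hM θ (by simp [hθ])
    exact ⟨A + M', ⟨_, _, hA, h3, rfl⟩, by simpa [add_comm] using h4.add A⟩

/-- `P` is structurally congruent to the configuration `s`. -/
def Represents (P : Proc n α) (s : Cfg n α) : Prop :=
  Den P (s.1.den + s.2) ∧ ∀ θ ∈ s.2, ∀ c ∈ θ, NM c

theorem TStep.nm {c : Cst n α} {ℓ r} (h : TStep u v c ℓ r) : ∀ d ∈ r, NM d := by
  cases h <;> simp [NM]

theorem MStep.nm {m m' : Mode} {ℓ q} (h : MStep (n := n) (α := α) m ℓ m' q) :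
    ∀ θ ∈ q, ∀ c ∈ θ, NM c := by
  cases h <;> simp [NM]

theorem mem_tm {β : Type} {θ l : List β} (h : θ ∈ tm l) : θ = l := by
  cases l <;> simp_all

/-- Transitions keep control constants out of the pool. -/
theorem CStep.nm {s t : Cfg n α} {ℓ} (h : CStep u v s ℓ t) (hs : ∀ θ ∈ s.2, ∀ c ∈ θ, NM c) :
    ∀ θ ∈ t.2, ∀ c ∈ θ, NM c := by
  rcases h with ⟨p, h⟩ | @⟨c, _, r, m, p, γ, h⟩
  · intro θ hθ
    rcases Multiset.mem_add.1 hθ with hθ | hθ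
    · exact hs θ hθ
    · exact h.nm θ hθ
  · intro θ hθ
    rcases Multiset.mem_add.1 hθ with hθ | hθ
    · exact hs θ (by simp at hθ ⊢; tauto)
    · obtain rfl := mem_tm hθ
      intro d hd
      rcases List.mem_append.1 hd with hd | hd
      · exact h.nm d hd
      · exact hs (c :: γ) (by simp) d (by simp [hd])

theorem CStep.gtrans {s t : Cfg n α} {ℓ} (h : CStep u v s ℓ t) {P} (hP : Represents P s) :
    ∃ Q, GTrans u v P ℓ Q ∧ Represents Q t := by
  have hn := h.nm hP.2
  have : HStep u v (s.1.den + s.2) ℓ (t.1.den + t.2) := by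
    rcases h with ⟨p, h⟩ | ⟨m, p, γ, h⟩
    · exact .mode p h
    · have := HStep.thr (m.den + p) γ h
      rw [Multiset.add_assoc, Multiset.add_assoc] at this
      exact this
  obtain ⟨Q, h1, h2⟩ := this.gtrans hP.1
  exact ⟨Q, h1, h2, hn⟩

theorem Mode.den_singleton {m : Mode} {c : Cst n α} (hc : [c] ∈ m.den) : ¬ NM c ∧ m.den = {[c]} := by
  cases m <;> simp [Mode.den, NM] at hc ⊢ <;> subst hc <;> simp

theorem Mode.den_inj {m m' : Mode} (h : m.den = (m'.den : Multiset (List (Cst n α)))) :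
    m = m' := by
  cases m <;> cases m' <;> simp [Mode.den] at h <;> rfl

theorem Represents.cstep {P Q : Proc n α} {s : Cfg n α} {ℓ} (hP : Represents P s) (h : GTrans u v P ℓ Q) :
    ∃ t, CStep u v s ℓ t ∧ Represents Q t := by
  obtain ⟨m, p⟩ := s
  obtain ⟨P', Q', h1, h2, h3⟩ := h
  have hw : WF (m.den + p) := by
    intro θ hθ
    rcases Multiset.mem_add.1 hθ with hθ | hθ
    · left
      cases m <;> simp [Mode.den] at hθ <;> exact ⟨_, hθ⟩
    · exact .inr (hP.2 θ hθ)
  obtain ⟨M', h4, h5⟩ := h2.hstep _ ((Den.sc h1 _).1 hP.1) hw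
  rw [Den.sc h3] at h4
  suffices ∃ t, CStep u v (m, p) ℓ t ∧ M' = t.1.den + t.2 by
    obtain ⟨t, h6, rfl⟩ := this
    exact ⟨t, h6, h4, h6.nm hP.2⟩
  have hp := hP.2
  clear hP h1 h2 h3 h4 hw
  generalize hM : m.den + p = M at h5
  rcases h5 with @⟨m₁, _, m', q, p₁, h⟩ | @⟨c, _, r, p₁, γ, h⟩
  · obtain ⟨c, T, hc, -⟩ := h.step (u := u) (v := v)
    have hcm : ¬ NM c := (Mode.den_singleton (m := m₁) (by simp [hc])).1
    have hmem : [c] ∈ m.den + p := by rw [hM, hc]; simp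
    rcases Multiset.mem_add.1 hmem with hm | hm
    · have := (Mode.den_singleton hm).2
      obtain rfl : m = m₁ := Mode.den_inj (this.trans hc.symm)
      obtain rfl : p = p₁ := by simpa using hM
      exact ⟨_, .mode p h, rfl⟩
    · exact (hcm (hp _ hm c (by simp))).elim
  · have hmem : c :: γ ∈ m.den + p := by rw [hM]; simp
    rcases Multiset.mem_add.1 hmem with hm | hm
    · cases m <;> simp [Mode.den] at hm <;> obtain ⟨rfl, rfl⟩ := hm <;> cases h
    · obtain ⟨p, rfl⟩ := exists_add_of_mem hm
      obtain rfl : m.den + p = p₁ := by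
        rw [← add_assoc] at hM
        simpa using hM
      exact ⟨_, .thr m p γ h, by simp [add_assoc]⟩

end Normal

/-! ### Branching and weak bisimilarity of labelled transition systems -/

section Generic
variable {S T A : Type} {tr : S → A → S → Prop} {tr' : T → A → T → Prop} {τ : A}

/-- One half of the transfer condition of branching bisimulation: the moves of `P` are
matched by `Q` up to `R`. -/
def Half (tr : S → A → S → Prop) (τ : A) (R : S → S → Prop) (P Q : S) : Prop :=
  ∀ ℓ P', tr P ℓ P' → (ℓ = τ ∧ R P' Q) ∨
    ∃ Q'' Q', SilentStar tr τ Q Q'' ∧ tr Q'' ℓ Q' ∧ R P Q'' ∧ R P' Q'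

theorem Half.mono {R R' : S → S → Prop} {P Q : S} (h : Half tr τ R P Q)
    (hR : ∀ P Q, R P Q → R' P Q) : Half tr τ R' P Q := by
  intro ℓ P' hP
  rcases h ℓ P' hP with ⟨h1, h2⟩ | ⟨Q'', Q', h1, h2, h3, h4⟩
  · exact .inl ⟨h1, hR _ _ h2⟩
  · exact .inr ⟨Q'', Q', h1, h2, hR _ _ h3, hR _ _ h4⟩

theorem isBranchingBisim_iff {R : S → S → Prop} : IsBranchingBisim tr τ R ↔
    ∀ P Q, R P Q → Half tr τ R P Q ∧ Half tr τ (flip R) Q P := Iff.rfl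

theorem BrBisim.half {P Q : S} (h : BrBisim tr τ P Q) : Half tr τ (BrBisim tr τ) P Q := by
  obtain ⟨R, hR, h⟩ := h
  exact Half.mono (isBranchingBisim_iff.1 hR P Q h).1 fun P Q h => ⟨R, hR, h⟩

theorem BrBisim.symm {P Q : S} (h : BrBisim tr τ P Q) : BrBisim tr τ Q P := by
  obtain ⟨R, hR, h⟩ := h
  refine ⟨flip R, ?_, h⟩
  rw [isBranchingBisim_iff] at *
  exact fun P Q h => (hR Q P h).symm

theorem BrBisim.half' {P Q : S} (h : BrBisim tr τ P Q) :
    Half tr τ (flip (BrBisim tr τ)) Q P :=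
  h.symm.half.mono fun _ _ => BrBisim.symm

/-- Branching bisimulation up to union with branching bisimilarity. -/
theorem BrBisim.upto (R : S → S → Prop)
    (h : ∀ P Q, R P Q → Half tr τ (fun P Q => R P Q ∨ BrBisim tr τ P Q) P Q ∧
      Half tr τ (fun Q P => R P Q ∨ BrBisim tr τ P Q) Q P)
    {P Q : S} (hPQ : R P Q) : BrBisim tr τ P Q := by
  refine ⟨fun P Q => R P Q ∨ BrBisim tr τ P Q, ?_, .inl hPQ⟩
  rw [isBranchingBisim_iff]
  rintro P Q (hPQ | hPQ)
  · exact h P Q hPQ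
  · exact ⟨hPQ.half.mono fun _ _ => .inr, hPQ.half'.mono fun _ _ => .inr⟩

theorem BrBisim.upto_symm (R : S → S → Prop) (hs : ∀ P Q, R P Q → R Q P)
    (h : ∀ P Q, R P Q → Half tr τ (fun P Q => R P Q ∨ BrBisim tr τ P Q) P Q)
    {P Q : S} (hPQ : R P Q) : BrBisim tr τ P Q := by
  refine BrBisim.upto R (fun P Q hPQ => ⟨h P Q hPQ, (h Q P (hs _ _ hPQ)).mono ?_⟩) hPQ
  exact fun P Q h => h.imp (hs _ _) BrBisim.symm

/-- States on a common silent cycle are branching bisimilar. -/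
theorem BrBisim.of_cycle {P Q : S} (h1 : SilentStar tr τ P Q) (h2 : SilentStar tr τ Q P) :
    BrBisim tr τ P Q := by
  refine ⟨fun P Q => SilentStar tr τ P Q ∧ SilentStar tr τ Q P, ?_, h1, h2⟩
  rw [isBranchingBisim_iff]
  rintro P Q ⟨h1, h2⟩
  exact ⟨fun ℓ P' h => .inr ⟨P, P', h2, h, ⟨.refl, .refl⟩, .refl, .refl⟩,
    fun ℓ P' h => .inr ⟨Q, P', h1, h, ⟨.refl, .refl⟩, .refl, .refl⟩⟩

theorem BrBisim.refl (P : S) : BrBisim tr τ P P := .of_cycle .refl .refl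

theorem WkBisim.symm {P Q : S} (h : WkBisim tr τ P Q) : WkBisim tr τ Q P := by
  obtain ⟨R, hR, h⟩ := h
  exact ⟨flip R, fun P Q h => (hR Q P h).symm, h⟩

theorem BrBisim.wkBisim {P Q : S} (h : BrBisim tr τ P Q) : WkBisim tr τ P Q := by
  obtain ⟨R, hR, h⟩ := h
  refine ⟨R, fun P Q h => ⟨fun ℓ P' hP => ?_, fun ℓ Q' hQ => ?_⟩, h⟩
  · rcases (hR P Q h).1 ℓ P' hP with ⟨rfl, h2⟩ | ⟨Q'', Q', h1, h2, h3, h4⟩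
    · exact ⟨Q, .inl ⟨rfl, .refl⟩, h2⟩
    · by_cases hl : ℓ = τ
      · subst hl
        exact ⟨Q', .inl ⟨rfl, h1.tail h2⟩, h4⟩
      · exact ⟨Q', .inr ⟨hl, _, _, h1, h2, .refl⟩, h4⟩
  · rcases (hR P Q h).2 ℓ Q' hQ with ⟨rfl, h2⟩ | ⟨P'', P', h1, h2, h3, h4⟩
    · exact ⟨P, .inl ⟨rfl, .refl⟩, h2⟩
    · by_cases hl : ℓ = τ
      · subst hl
        exact ⟨P', .inl ⟨rfl, h1.tail h2⟩, h4⟩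
      · exact ⟨P', .inr ⟨hl, _, _, h1, h2, .refl⟩, h4⟩

theorem WkBisim.star {P Q P' : S} (h : WkBisim tr τ P Q) (hP : SilentStar tr τ P P') :
    ∃ Q', SilentStar tr τ Q Q' ∧ WkBisim tr τ P' Q' := by
  induction hP with
  | refl => exact ⟨Q, .refl, h⟩
  | tail _ h1 ih =>
    obtain ⟨Q', h2, R, hR, h3⟩ := ih
    obtain ⟨Q'', h4 | h4, h5⟩ := (hR _ _ h3).1 _ _ h1
    · exact ⟨Q'', h2.trans h4.2, R, hR, h5⟩
    · exact (h4.1 rfl).elim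

theorem WkBisim.step {P Q P' : S} {ℓ} (h : WkBisim tr τ P Q) (hP : tr P ℓ P') (hl : ℓ ≠ τ) :
    ∃ Q₁ Q₂ Q', SilentStar tr τ Q Q₁ ∧ tr Q₁ ℓ Q₂ ∧ SilentStar tr τ Q₂ Q' ∧
      WkBisim tr τ P' Q' := by
  obtain ⟨R, hR, h⟩ := h
  obtain ⟨Q'', h4 | ⟨-, Q₁, Q₂, h1, h2, h3⟩, h5⟩ := (hR _ _ h).1 _ _ hP
  · exact (hl h4.1).elim
  · exact ⟨Q₁, Q₂, Q'', h1, h2, h3, R, hR, h5⟩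

/-- Silent moves transfer along a strong (bi)simulation. -/
theorem SilentStar.transfer {B : S → T → Prop}
    (hB : ∀ P s ℓ P', B P s → tr P ℓ P' → ∃ s', tr' s ℓ s' ∧ B P' s')
    {P P' : S} (h : SilentStar tr τ P P') {s} (hP : B P s) :
    ∃ s', SilentStar tr' τ s s' ∧ B P' s' := by
  induction h with
  | refl => exact ⟨s, .refl, hP⟩
  | tail _ h1 ih =>
    obtain ⟨s', h2, h3⟩ := ih
    obtain ⟨s'', h4, h5⟩ := hB _ _ _ _ h3 h1
    exact ⟨s'', h2.tail h4, h5⟩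

/-- Branching bisimilarity transfers along a strong bisimulation. -/
theorem BrBisim.transfer {B : S → T → Prop}
    (hB : ∀ P s ℓ P', B P s → tr P ℓ P' → ∃ s', tr' s ℓ s' ∧ B P' s')
    (hB' : ∀ P s ℓ s', B P s → tr' s ℓ s' → ∃ P', tr P ℓ P' ∧ B P' s')
    {s t : T} (h : BrBisim tr' τ s t) {P Q : S} (hP : B P s) (hQ : B Q t) :
    BrBisim tr τ P Q := by
  let R : S → S → Prop := fun P Q => ∃ s t, B P s ∧ B Q t ∧ BrBisim tr' τ s t
  have key : ∀ P Q, R P Q → Half tr τ R P Q := by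
    rintro P Q ⟨s, t, hP, hQ, h⟩ ℓ P' hp
    obtain ⟨s', hs, hP'⟩ := hB _ _ _ _ hP hp
    rcases h.half ℓ s' hs with ⟨h1, h2⟩ | ⟨t'', t', h1, h2, h3, h4⟩
    · exact .inl ⟨h1, _, _, hP', hQ, h2⟩
    · obtain ⟨Q'', h5, h6⟩ := SilentStar.transfer (B := flip B)
        (fun s P ℓ s' h1 h2 => hB' P s ℓ s' h1 h2) h1 hQ
      obtain ⟨Q', h7, h8⟩ := hB' _ _ _ _ h6 h2
      exact .inr ⟨Q'', Q', h5, h7, ⟨_, _, hP, h6, h3⟩, _, _, hP', h8, h4⟩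
  refine BrBisim.upto_symm R ?_ ?_ (⟨s, t, hP, hQ, h⟩ : R P Q)
  · rintro P Q ⟨s, t, hP, hQ, h⟩
    exact ⟨t, s, hQ, hP, h.symm⟩
  · exact fun P Q h => (key P Q h).mono fun _ _ => .inl

theorem WeakStep.transfer {B : S → T → Prop}
    (hB : ∀ P s ℓ P', B P s → tr P ℓ P' → ∃ s', tr' s ℓ s' ∧ B P' s')
    {ℓ : A} {P P' : S} (h : WeakStep tr τ ℓ P P') {s} (hP : B P s) :
    ∃ s', WeakStep tr' τ ℓ s s' ∧ B P' s' := by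
  rcases h with ⟨hl, h⟩ | ⟨hl, P₁, P₂, h1, h2, h3⟩
  · obtain ⟨s', h1, h2⟩ := h.transfer hB hP
    exact ⟨s', .inl ⟨hl, h1⟩, h2⟩
  · obtain ⟨s₁, h4, h5⟩ := h1.transfer hB hP
    obtain ⟨s₂, h6, h7⟩ := hB _ _ _ _ h5 h2
    obtain ⟨s', h8, h9⟩ := h3.transfer hB h7
    exact ⟨s', .inr ⟨hl, _, _, h4, h6, h8⟩, h9⟩

/-- Weak bisimilarity transfers along a strong bisimulation. -/
theorem WkBisim.transfer {B : S → T → Prop}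
    (hB : ∀ P s ℓ P', B P s → tr P ℓ P' → ∃ s', tr' s ℓ s' ∧ B P' s')
    (hB' : ∀ P s ℓ s', B P s → tr' s ℓ s' → ∃ P', tr P ℓ P' ∧ B P' s')
    {s t : T} {P Q : S} (h : WkBisim tr τ P Q) (hP : B P s) (hQ : B Q t) :
    WkBisim tr' τ s t := by
  obtain ⟨R, hR, h⟩ := h
  refine ⟨fun s t => ∃ P Q, B P s ∧ B Q t ∧ R P Q, ?_, P, Q, hP, hQ, h⟩
  rintro s t ⟨P, Q, hP, hQ, h⟩
  constructor
  · intro ℓ s' hs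
    obtain ⟨P', h1, h2⟩ := hB' _ _ _ _ hP hs
    obtain ⟨Q', h3, h4⟩ := (hR _ _ h).1 _ _ h1
    obtain ⟨t', h5, h6⟩ := h3.transfer hB hQ
    exact ⟨t', h5, P', Q', h2, h6, h4⟩
  · intro ℓ t' ht
    obtain ⟨Q', h1, h2⟩ := hB' _ _ _ _ hQ ht
    obtain ⟨P', h3, h4⟩ := (hR _ _ h).2 _ _ h1
    obtain ⟨s', h5, h6⟩ := h3.transfer hB hP
    exact ⟨s', h5, P', Q', h6, h2, h4⟩

end Generic

/-! ### Moves of pools and threads -/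

section Config
variable {n : ℕ} {α : Type} {u v : Fin n → List α}

theorem star_lift {S T : Type} {r : S → S → Prop} {r' : T → T → Prop} (f : S → T)
    (hf : ∀ a b, r a b → r' (f a) (f b)) {a b : S} (h : ReflTransGen r a b) :
    ReflTransGen r' (f a) (f b) := by
  induction h with
  | refl => exact .refl
  | tail _ h ih => exact ih.tail (hf _ _ h)

/-- Silent reachability of configurations. -/
abbrev CStar (u v : Fin n → List α) : Cfg n α → Cfg n α → Prop :=
  SilentStar (CStep u v) Lab.tau

/-- Branching bisimilarity of configurations. -/
abbrev CBr (u v : Fin n → List α) : Cfg n α → Cfg n α → Prop := BrBisim (CStep u v) Lab.tau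

/-- Weak bisimilarity of configurations. -/
abbrev CWk (u v : Fin n → List α) : Cfg n α → Cfg n α → Prop := WkBisim (CStep u v) Lab.tau

/-- Transitions of a single thread, performed by its head. -/
def ThStep (u v : Fin n → List α) (θ : List (Cst n α)) (ℓ : Lab n α) (θ' : List (Cst n α)) :
    Prop :=
  ∃ c γ r, θ = c :: γ ∧ TStep u v c ℓ r ∧ θ' = r ++ γ

/-- Silent reachability of threads. -/
abbrev ThStar (u v : Fin n → List α) : List (Cst n α) → List (Cst n α) → Prop :=
  ReflTransGen fun θ₁ θ₂ => ThStep u v θ₁ .tau θ₂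

/-- Transitions of a pool, performed by one of its threads. -/
def PStep (u v : Fin n → List α) (p : Multiset (List (Cst n α))) (ℓ : Lab n α)
    (p' : Multiset (List (Cst n α))) : Prop :=
  ∃ p₀ θ₁ θ₂, p = p₀ + tm θ₁ ∧ ThStep u v θ₁ ℓ θ₂ ∧ p' = p₀ + tm θ₂

/-- Silent reachability of pools. -/
abbrev PStar (u v : Fin n → List α) :
    Multiset (List (Cst n α)) → Multiset (List (Cst n α)) → Prop :=
  ReflTransGen fun p₁ p₂ => PStep u v p₁ .tau p₂

theorem TStep.thStep {c : Cst n α} {ℓ r} (h : TStep u v c ℓ r) (γ) :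
    ThStep u v (c :: γ) ℓ (r ++ γ) := ⟨c, γ, r, rfl, h, rfl⟩

theorem ThStep.append {θ θ' : List (Cst n α)} {ℓ} (h : ThStep u v θ ℓ θ') (δ) :
    ThStep u v (θ ++ δ) ℓ (θ' ++ δ) := by
  obtain ⟨c, γ, r, rfl, h, rfl⟩ := h
  exact ⟨c, γ ++ δ, r, rfl, h, by simp⟩

theorem ThStar.append {θ θ' : List (Cst n α)} (h : ThStar u v θ θ') (δ) :
    ThStar u v (θ ++ δ) (θ' ++ δ) :=
  star_lift (· ++ δ) (fun _ _ h => h.append δ) h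

theorem ThStep.pStep {θ θ' : List (Cst n α)} {ℓ} (h : ThStep u v θ ℓ θ') (p) :
    PStep u v (p + tm θ) ℓ (p + tm θ') := ⟨p, θ, θ', rfl, h, rfl⟩

theorem ThStar.pStar {θ θ' : List (Cst n α)} (h : ThStar u v θ θ') (p) :
    PStar u v (p + tm θ) (p + tm θ') :=
  star_lift (p + tm ·) (fun _ _ h => h.pStep p) h

theorem PStep.add {p p' : Multiset (List (Cst n α))} {ℓ} (h : PStep u v p ℓ p') (q) :
    PStep u v (p + q) ℓ (p' + q) := by
  obtain ⟨p₀, θ, θ', rfl, h, rfl⟩ := h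
  exact ⟨p₀ + q, θ, θ', by ac_rfl, h, by ac_rfl⟩

theorem PStar.add {p p' : Multiset (List (Cst n α))} (h : PStar u v p p') (q) :
    PStar u v (p + q) (p' + q) :=
  star_lift (· + q) (fun _ _ h => h.add q) h

theorem PStep.cStep {p p' : Multiset (List (Cst n α))} {ℓ} (h : PStep u v p ℓ p') (m) :
    CStep u v (m, p) ℓ (m, p') := by
  obtain ⟨p₀, _, _, rfl, ⟨c, γ, r, rfl, h, rfl⟩, rfl⟩ := h
  exact .thr m p₀ γ h

theorem PStar.cStar {p p' : Multiset (List (Cst n α))} (h : PStar u v p p') (m) :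
    CStar u v (m, p) (m, p') :=
  star_lift (fun p => (m, p)) (fun _ _ h => h.cStep m) h

theorem ThStep.cStep {θ θ' : List (Cst n α)} {ℓ} (h : ThStep u v θ ℓ θ') (m p) :
    CStep u v (m, p + tm θ) ℓ (m, p + tm θ') := (h.pStep p).cStep m

theorem ThStar.cStar {θ θ' : List (Cst n α)} (h : ThStar u v θ θ') (m p) :
    CStar u v (m, p + tm θ) (m, p + tm θ') := (h.pStar p).cStar m

theorem CStep.cases {m : Mode} {p : Multiset (List (Cst n α))} {ℓ s'}
    (h : CStep u v (m, p) ℓ s') :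
    (∃ m' q, MStep m ℓ m' q ∧ s' = (m', p + q)) ∨ ∃ p', PStep u v p ℓ p' ∧ s' = (m, p') := by
  rcases h with ⟨p, h⟩ | ⟨m, p, γ, h⟩
  · exact .inl ⟨_, _, h, rfl⟩
  · exact .inr ⟨_, (h.thStep γ).pStep p, rfl⟩

theorem ThStep.ne_nil {θ θ' : List (Cst n α)} {ℓ} (h : ThStep u v θ ℓ θ') : θ ≠ [] := by
  obtain ⟨c, γ, r, rfl, h, rfl⟩ := h
  simp

theorem tm_of_ne_nil {β : Type} {l : List β} (h : l ≠ []) : tm l = {l} := by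
  cases l <;> simp_all

theorem PStep.cases {p p' : Multiset (List (Cst n α))} {θ ℓ}
    (h : PStep u v (p + tm θ) ℓ p') :
    (∃ p₁, PStep u v p ℓ p₁ ∧ p' = p₁ + tm θ) ∨
      ∃ θ', ThStep u v θ ℓ θ' ∧ p' = p + tm θ' := by
  obtain ⟨p₀, θ₁, θ₂, h1, h2, rfl⟩ := h
  by_cases he : θ = θ₁
  · subst he
    obtain rfl : p = p₀ := by simpa using h1
    exact .inr ⟨_, h2, rfl⟩
  · left
    have hmem : θ₁ ∈ p + tm θ := by rw [h1, tm_of_ne_nil h2.ne_nil]; simp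
    rcases Multiset.mem_add.1 hmem with hm | hm
    · obtain ⟨q, rfl⟩ := exists_add_of_mem hm
      rw [← tm_of_ne_nil h2.ne_nil] at h1 ⊢
      have : q + tm θ = p₀ := by
        rw [add_right_comm] at h1
        simpa using h1
      subst this
      exact ⟨q + tm θ₂, h2.pStep q, by ac_rfl⟩
    · exact (he (mem_tm hm).symm).elim

/-- The three kinds of moves of a configuration with a distinguished thread `θ`. -/
theorem CStep.cases_add {m : Mode} {p : Multiset (List (Cst n α))} {θ ℓ s'}
    (h : CStep u v (m, p + tm θ) ℓ s') :
    (∃ m' q, MStep m ℓ m' q ∧ s' = (m', p + q + tm θ)) ∨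
    (∃ p', PStep u v p ℓ p' ∧ s' = (m, p' + tm θ)) ∨
    ∃ θ', ThStep u v θ ℓ θ' ∧ s' = (m, p + tm θ') := by
  rcases h.cases with ⟨m', q, hm, rfl⟩ | ⟨p', hp, rfl⟩
  · exact .inl ⟨m', q, hm, by rw [add_right_comm]⟩
  · rcases hp.cases with ⟨p₁, hp₁, rfl⟩ | ⟨θ', hθ, rfl⟩
    · exact .inr (.inl ⟨p₁, hp₁, rfl⟩)
    · exact .inr (.inr ⟨θ', hθ, rfl⟩)

theorem MStep.cStep {m m' : Mode} {ℓ : Lab n α} {q} (h : MStep m ℓ m' q) (p) :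
    CStep u v (m, p) ℓ (m', p + q) := .mode p h

theorem MStep.cStep_add {m m' : Mode} {ℓ : Lab n α} {q} (h : MStep m ℓ m' q) (p t) :
    CStep u v (m, p + t) ℓ (m', p + q + t) := by
  rw [add_right_comm]
  exact .mode _ h

/-! ### Silent erasure of threads -/

theorem TStep.thStar {c : Cst n α} {r} (h : TStep u v c .tau r) : ThStar u v [c] r :=
  .single (by simpa using h.thStep [])

theorem ThStar.erase_W (ω : List α) (k : Option (Fin n)) : ThStar u v [.W ω k] [] := by
  induction ω with
  | nil =>
    cases k with
    | none => exact TStep.wE.thStar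
    | some i => exact (TStep.wTi _ _).thStar.trans TStep.wE.thStar
  | cons a ω ih => exact (TStep.wTa _ _ _).thStar.trans ih

theorem ThStar.erase_one {c : Cst n α} (h : NM c) : ThStar u v [c] [] := by
  cases c with
  | Z => exact TStep.zE.thStar
  | G => exact TStep.gE.thStar
  | G' => exact TStep.g'Z.thStar.trans TStep.zE.thStar
  | Gu => exact TStep.guGv'.thStar.trans (TStep.gv'Z.thStar.trans TStep.zE.thStar)
  | Gv => exact TStep.gvE.thStar
  | Gv' => exact TStep.gv'Z.thStar.trans TStep.zE.thStar
  | U i => exact (TStep.uW i).thStar.trans (ThStar.erase_W _ _)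
  | V i => exact (TStep.vW i).thStar.trans (ThStar.erase_W _ _)
  | W ω k => exact ThStar.erase_W _ _
  | _ => exact h.elim

theorem ThStar.erase {θ : List (Cst n α)} (h : ∀ c ∈ θ, NM c) : ThStar u v θ [] := by
  induction θ with
  | nil => exact .refl
  | cons c θ ih =>
    exact ((ThStar.erase_one (h c (by simp))).append θ).trans (ih fun d hd => h d (by simp [hd]))

theorem PStar.erase {p : Multiset (List (Cst n α))} (h : ∀ θ ∈ p, θ ≠ [] ∧ ∀ c ∈ θ, NM c) :
    PStar u v p 0 := by
  induction p using Multiset.induction_on with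
  | empty => exact .refl
  | cons θ p ih =>
    have h1 := (ThStar.erase (u := u) (v := v) (h θ (by simp)).2).pStar 0
    have h2 := PStar.add h1 p
    rw [tm_of_ne_nil (h θ (by simp)).1] at h2
    have h3 : PStar u v (θ ::ₘ p) p := by simpa using h2
    exact h3.trans (ih fun θ' h' => h θ' (by simp [h']))

end Config

/-! ### Letters and indices carried by a thread -/

section Observe
variable {n : ℕ} {α : Type} {u v : Fin n → List α}

/-- The constants `U i`, `V i` and `W ω k`, which carry letters and indices. -/
def Dat : Cst n α → Prop
  | .U _ | .V _ | .W _ _ => True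
  | _ => False

theorem Dat.nm {c : Cst n α} (h : Dat c) : NM c := by
  cases c <;> simp_all [Dat, NM]

theorem Dat.step {c : Cst n α} {ℓ r} (h : Dat c) (hc : TStep u v c ℓ r) : ∀ d ∈ r, Dat d := by
  cases hc <;> simp_all [Dat]

/-- The letters carried by a constant. -/
def lets (u v : Fin n → List α) : Cst n α → List α
  | .U i => u i
  | .V i => v i
  | .W ω _ => ω
  | _ => []

/-- The indices carried by a constant. -/
def idxs : Cst n α → List (Fin n)
  | .U i => [i]
  | .V i => [i]
  | .W _ k => k.toList
  | _ => []

/-- A mode `m` (either `I` or `S`) in which exactly the symbols of type `β` carried by a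
thread are observable. The mode is entered from `C` and left by the label `e`, the symbol `x`
is observed by the label `lab x`, and the content of a constant is `cont`; labels of the other
kind of symbols are available in mode `m` at any time. -/
structure Obs (u v : Fin n → List α) (β : Type) where
  m : Mode
  e : Lab n α
  lab : β → Lab n α
  cont : Cst n α → List β
  e_ne : e ≠ .tau
  entry : MStep .C e m 0
  entry_uniq : ∀ {m' q}, MStep .C e m' q → m' = m ∧ q = 0
  thr_ne : ∀ {c r}, ¬ TStep u v c e r
  lab_inj : ∀ {x y}, lab x = lab y → x = y
  lab_ne : ∀ x, lab x ≠ .tau ∧ lab x ≠ e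
  mode : ∀ {ℓ m' q}, MStep m ℓ m' q →
    q = 0 ∧ ((ℓ = e ∧ m' = .F) ∨ (m' = m ∧ ℓ ≠ .tau ∧ ∀ x, ℓ ≠ lab x))
  thr : ∀ {c ℓ r}, Dat c → TStep u v c ℓ r →
    ((ℓ = .tau ∨ MStep m ℓ m 0) ∧ r.flatMap cont = cont c ∧ ∀ x, ℓ ≠ lab x) ∨
    ∃ x, cont c = x :: r.flatMap cont ∧ (ℓ = .tau ∨ ℓ = lab x)
  head : ∀ {c x ξ}, Dat c → cont c = x :: ξ →
    ∃ d d₁, ThStar u v [c] [d] ∧ Dat d ∧ Dat d₁ ∧ cont d = x :: ξ ∧ cont d₁ = ξ ∧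
      TStep u v d (lab x) [d₁] ∧ TStep u v d .tau [d₁]

/-- In mode `I` the letters are observable. -/
def obsI (u v : Fin n → List α) : Obs u v α where
  m := .I
  e := .lI
  lab := .ltr
  cont := lets u v
  e_ne := by simp
  entry := .cI
  entry_uniq := by rintro _ _ ⟨⟩; simp
  thr_ne := by rintro _ _ ⟨⟩
  lab_inj := by simp
  lab_ne := by simp
  mode := by rintro _ _ _ ⟨⟩ <;> simp
  thr := by
    intro c ℓ r hc h
    cases h <;> simp [Dat, lets] at hc ⊢
    exact .iI _
  head := by
    intro c x ξ hc h
    cases c <;> simp [Dat, lets] at hc h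
    · exact ⟨.W (x :: ξ) (some _), .W ξ (some _),
        h ▸ (TStep.uW (u := u) (v := v) _).thStar, by
        simp [Dat], by simp [Dat], rfl, rfl, .wA _ _ _, .wTa _ _ _⟩
    · exact ⟨.W (x :: ξ) (some _), .W ξ (some _),
        h ▸ (TStep.vW (u := u) (v := v) _).thStar, by
        simp [Dat], by simp [Dat], rfl, rfl, .wA _ _ _, .wTa _ _ _⟩
    · subst h
      exact ⟨_, .W ξ _, .refl, by
        simp [Dat], by simp [Dat], rfl, rfl, .wA _ _ _, .wTa _ _ _⟩

/-- In mode `S` the indices are observable. -/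
def obsS (u v : Fin n → List α) : Obs u v (Fin n) where
  m := .S
  e := .lS
  lab := .idx
  cont := idxs
  e_ne := by simp
  entry := .cS
  entry_uniq := by rintro _ _ ⟨⟩; simp
  thr_ne := by rintro _ _ ⟨⟩
  lab_inj := by simp
  lab_ne := by simp
  mode := by rintro _ _ _ ⟨⟩ <;> simp
  thr := by
    intro c ℓ r hc h
    cases h <;> simp [Dat, idxs] at hc ⊢
    exact .sS _
  head := by
    intro c x ξ hc h
    cases c with
    | U i =>
      obtain ⟨rfl, rfl⟩ : i = x ∧ ξ = [] := by simpa [idxs, eq_comm] using h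
      exact ⟨_, _, (TStep.uW _).thStar, by
        simp [Dat], by simp [Dat], rfl, rfl, .wI _ _, .wTi _ _⟩
    | V i =>
      obtain ⟨rfl, rfl⟩ : i = x ∧ ξ = [] := by simpa [idxs, eq_comm] using h
      exact ⟨_, _, (TStep.vW _).thStar, by
        simp [Dat], by simp [Dat], rfl, rfl, .wI _ _, .wTi _ _⟩
    | W ω k =>
      cases k with
      | none => simp [idxs] at h
      | some i =>
        obtain ⟨rfl, rfl⟩ : i = x ∧ ξ = [] := by simpa [idxs, eq_comm] using h
        exact ⟨_, _, .refl, by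
          simp [Dat], by simp [Dat], rfl, rfl, .wI _ _, .wTi _ _⟩
    | _ => exact hc.elim

/-- The word of observable symbols carried by a thread. -/
def Obs.word {β : Type} (O : Obs u v β) (γ : List (Cst n α)) : List β := γ.flatMap O.cont

@[simp] theorem Obs.word_nil {β : Type} (O : Obs u v β) : O.word [] = [] := rfl

@[simp] theorem Obs.word_cons {β : Type} (O : Obs u v β) (c : Cst n α) (γ) :
    O.word (c :: γ) = O.cont c ++ O.word γ := rfl

@[simp] theorem Obs.word_append {β : Type} (O : Obs u v β) (γ δ : List (Cst n α)) :
    O.word (γ ++ δ) = O.word γ ++ O.word δ := by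
  simp [Obs.word]

/-- A thread whose word starts with `x` can silently reach a thread with the same word that
offers `x` immediately. -/
theorem Obs.expose {β : Type} (O : Obs u v β) {γ : List (Cst n α)} {x ξ}
    (hγ : ∀ c ∈ γ, Dat c) (hw : O.word γ = x :: ξ) :
    ∃ γ₂ γ₃, ThStar u v γ γ₂ ∧ (∀ c ∈ γ₂, Dat c) ∧ (∀ c ∈ γ₃, Dat c) ∧
      O.word γ₂ = x :: ξ ∧ O.word γ₃ = ξ ∧
      ThStep u v γ₂ (O.lab x) γ₃ ∧ ThStep u v γ₂ .tau γ₃ := by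
  induction γ with
  | nil => simp at hw
  | cons c γ ih =>
    have hc := hγ c (by simp)
    have hγ' : ∀ c ∈ γ, Dat c := fun c hc => hγ c (by simp [hc])
    rcases hcc : O.cont c with _ | ⟨y, η⟩
    · obtain ⟨γ₂, γ₃, h1, h2⟩ := ih hγ' (by simpa [hcc] using hw)
      exact ⟨γ₂, γ₃, ((ThStar.erase_one hc.nm).append γ).trans h1, h2⟩
    · obtain ⟨rfl, rfl⟩ : y = x ∧ η ++ O.word γ = ξ := by simpa [hcc] using hw
      obtain ⟨d, d', h1, h2, h3, h4, h5, h6, h7⟩ := O.head hc hcc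
      refine ⟨d :: γ, d' :: γ, h1.append γ, ?_, ?_, ?_, ?_, h6.thStep γ, h7.thStep γ⟩
      · simpa [h2] using hγ'
      · simpa [h3] using hγ'
      · simp [h4]
      · simp [h5]

end Observe

/-! ### Silent cycles -/

section Cycles
variable {n : ℕ} {α : Type} {u v : Fin n → List α}

theorem ThStar.one {c : Cst n α} {r} (h : TStep u v c .tau r) (γ) :
    ThStar u v (c :: γ) (r ++ γ) := .single (h.thStep γ)

theorem CStar.drop {θ : List (Cst n α)} (h : ∀ c ∈ θ, NM c) (m p) :
    CStar u v (m, p + tm θ) (m, p) := by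
  simpa using (ThStar.erase h).cStar m p

/-- If a mode can silently spawn the thread `c`, it can silently add any thread that `c` grows
into. -/
theorem MStep.spawn {m : Mode} {c : Cst n α} (h : MStep m .tau m {[c]}) {θ}
    (hθ : ThStar u v [c] θ) (p) : CStar u v (m, p) (m, p + tm θ) :=
  ReflTransGen.head (h.cStep p) (hθ.cStar m p)

/-- The possible leading constants of a thread whose remaining constants carry data. -/
def Pre (l : List (Cst n α)) : Prop := l = [] ∨ l = [.Gv] ∨ l = [.Z]

theorem CStar.spawnF {pre γ : List (Cst n α)} (hpre : Pre pre) (hγ : ∀ c ∈ γ, Dat c) (p) :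
    CStar u v (.F, p) (.F, p + tm (pre ++ γ)) := by
  refine MStep.spawn .fG ?_ p
  have h : ThStar u v [.G'] (.G' :: γ) := by
    induction γ with
    | nil => exact .refl
    | cons c γ ih =>
      refine (ih fun c hc => hγ c (by simp [hc])).trans ?_
      have hc := hγ c (by simp)
      cases c with
      | U i => exact ThStar.one (.g'U i) γ
      | V i => exact ThStar.one (.g'V i) γ
      | W ω k => exact ThStar.one (.g'W ω k) γ
      | _ => exact hc.elim
  rcases hpre with rfl | rfl | rfl
  · exact h.trans ((ThStar.one .g'Z γ).trans (ThStar.one .zE γ))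
  · exact h.trans (ThStar.one .g'Gv γ)
  · exact h.trans (ThStar.one .g'Z γ)

/-- The thread `V_{i₁} … V_{iₖ}`. -/
abbrev vs (x : List (Fin n)) : List (Cst n α) := x.map .V

/-- The thread `U_{i₁} … U_{iₖ}`. -/
abbrev us (w : List (Fin n)) : List (Cst n α) := w.map .U

theorem CStar.spawnC {γ : List (Cst n α)} (hγ : ∀ c ∈ γ, IsUV c) (p) :
    CStar u v (.C, p) (.C, p + tm γ) := by
  refine MStep.spawn .cG ?_ p
  have h : ThStar u v [.G] (.G :: γ) := by
    induction γ with
    | nil => exact .refl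
    | cons c γ ih =>
      refine (ih fun c hc => hγ c (by simp [hc])).trans ?_
      rcases hγ c (by simp) with ⟨i, rfl⟩ | ⟨i, rfl⟩
      · exact ThStar.one (.gU i) γ
      · exact ThStar.one (.gV i) γ
  exact h.trans (ThStar.one .gE γ)

theorem ThStar.growGv (x : List (Fin n)) (γ : List (Cst n α)) :
    ThStar u v (.Gv :: γ) (.Gv :: (vs x ++ γ)) := by
  induction x with
  | nil => exact .refl
  | cons i x ih => exact ih.trans (ThStar.one (.gvT i) _)

theorem CStar.spawnCGv (x : List (Fin n)) (p : Multiset (List (Cst n α))) :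
    CStar u v (.C, p) (.C, p + tm (.Gv :: vs x)) := by
  refine MStep.spawn .cGv ?_ p
  simpa using ThStar.growGv x []

theorem ThStar.growGu (w : List (Fin n)) : ThStar u v [.Gu] (.Gu :: us w) := by
  induction w with
  | nil => exact .refl
  | cons i w ih => exact ih.trans (ThStar.one (.guT i) _)

theorem CStar.spawnDGu (w : List (Fin n)) (p : Multiset (List (Cst n α))) :
    CStar u v (.D, p) (.D, p + tm (.Gu :: us w)) :=
  MStep.spawn .dT (ThStar.growGu w) p

theorem CStar.spawnDZ (x w : List (Fin n)) (p : Multiset (List (Cst n α))) :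
    CStar u v (.D, p) (.D, p + tm (.Z :: (vs x ++ us w))) := by
  refine MStep.spawn .dT ((ThStar.growGu w).trans ((ThStar.one .guGv' _).trans ?_)) p
  have h : ThStar u v (.Gv' :: us w) (.Gv' :: (vs x ++ us w)) := by
    induction x with
    | nil => exact .refl
    | cons i x ih => exact ih.trans (ThStar.one (.gv'T i) _)
  exact h.trans (ThStar.one .gv'Z _)

theorem CStar.spawnD (x w : List (Fin n)) (p : Multiset (List (Cst n α))) :
    CStar u v (.D, p) (.D, p + tm (vs x ++ us w)) :=
  (CStar.spawnDZ x w p).trans ((ThStar.one .zE _).cStar _ _)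

theorem nm_append {γ δ : List (Cst n α)} (h : ∀ c ∈ γ, NM c) (h' : ∀ c ∈ δ, NM c) :
    ∀ c ∈ γ ++ δ, NM c := by
  simpa [or_imp, forall_and] using ⟨h, h'⟩

theorem dat_vs (x : List (Fin n)) : ∀ c ∈ vs (α := α) x, Dat c := by simp [Dat]

theorem dat_us (x : List (Fin n)) : ∀ c ∈ us (α := α) x, Dat c := by simp [Dat]

theorem IsUV.dat {c : Cst n α} (h : IsUV c) : Dat c := by
  rcases h with ⟨i, rfl⟩ | ⟨i, rfl⟩ <;> simp [Dat]

end Cycles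

/-! ### A solution makes `X` and `Y` branching bisimilar -/

section Forward
variable {n : ℕ} {α : Type} {u v : Fin n → List α}

theorem Pre.nm {l : List (Cst n α)} (h : Pre l) : ∀ c ∈ l, NM c := by
  rcases h with rfl | rfl | rfl <;> simp [NM]

/-- In an observing mode, threads with the same observable word are interchangeable. -/
theorem Obs.br {β : Type} (O : Obs u v β) {pre γ γ' : List (Cst n α)} (hpre : Pre pre)
    (hγ : ∀ c ∈ γ, Dat c) (hγ' : ∀ c ∈ γ', Dat c) (hw : O.word γ = O.word γ') (p) :
    CBr u v (O.m, p + tm (pre ++ γ)) (O.m, p + tm (pre ++ γ')) := by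
  let R : Cfg n α → Cfg n α → Prop := fun s t => ∃ p pre γ γ', Pre pre ∧ (∀ c ∈ γ, Dat c) ∧
    (∀ c ∈ γ', Dat c) ∧ O.word γ = O.word γ' ∧ s = (O.m, p + tm (pre ++ γ)) ∧
    t = (O.m, p + tm (pre ++ γ'))
  refine BrBisim.upto_symm R ?_ ?_ (⟨p, pre, γ, γ', hpre, hγ, hγ', hw, rfl, rfl⟩ : R _ _)
  · rintro s t ⟨p, pre, γ, γ', hpre, hγ, hγ', hw, rfl, rfl⟩
    exact ⟨p, pre, γ', γ, hpre, hγ', hγ, hw.symm, rfl, rfl⟩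
  clear hγ hγ' hw hpre p pre γ γ'
  rintro s t hR ℓ s' hs
  have hR' := hR
  obtain ⟨p, pre, γ, γ', hpre, hγ, hγ', hw, rfl, rfl⟩ := hR
  rcases hs.cases_add with ⟨m', q, hm, rfl⟩ | ⟨p', hp, rfl⟩ | ⟨θ', hθ, rfl⟩
  · refine .inr ⟨_, _, .refl, hm.cStep_add p _, .inl hR', ?_⟩
    obtain ⟨rfl, ⟨rfl, rfl⟩ | ⟨rfl, -⟩⟩ := O.mode hm
    · right
      have h1 := nm_append hpre.nm fun c hc => (hγ c hc).nm
      have h2 := nm_append hpre.nm fun c hc => (hγ' c hc).nm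
      exact .of_cycle ((CStar.drop h1 _ _).trans (CStar.spawnF hpre hγ' _))
        ((CStar.drop h2 _ _).trans (CStar.spawnF hpre hγ _))
    · exact .inl ⟨_, pre, γ, γ', hpre, hγ, hγ', hw, rfl, rfl⟩
  · exact .inr ⟨_, _, .refl, (hp.add _).cStep _, .inl hR',
      .inl ⟨p', pre, γ, γ', hpre, hγ, hγ', hw, rfl, rfl⟩⟩
  · rcases hpre with rfl | rfl | rfl
    · obtain ⟨c, γ₀, r, rfl, hc, rfl⟩ := hθ
      have hγ₁ : ∀ d ∈ r ++ γ₀, Dat d := by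
        intro d hd
        rcases List.mem_append.1 hd with hd | hd
        · exact (hγ c (by simp)).step hc d hd
        · exact hγ d (by simp [hd])
      rcases O.thr (hγ c (by simp)) hc with ⟨h1, h2, -⟩ | ⟨x, h1, h2⟩
      · have hw' : O.word (r ++ γ₀) = O.word γ' := by
          rw [← hw, O.word_append, O.word_cons, ← h2, Obs.word]
        have hR₁ : R (O.m, p + tm (r ++ γ₀)) (O.m, p + tm ([] ++ γ')) :=
          ⟨p, [], r ++ γ₀, γ', .inl rfl, hγ₁, hγ', hw', rfl, rfl⟩
        rcases h1 with rfl | h1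
        · exact .inl ⟨rfl, .inl hR₁⟩
        · refine .inr ⟨_, _, .refl, h1.cStep _, .inl hR', .inl ?_⟩
          simpa using hR₁
      · have hw' : O.word γ' = x :: O.word (r ++ γ₀) := by
          rw [← hw, O.word_append, O.word_cons, h1]
          rfl
        obtain ⟨γ₂, γ₃, h3, h4, h5, h6, h7, h8, h9⟩ := O.expose hγ' hw'
        have h10 : ThStep u v γ₂ ℓ γ₃ := by
          rcases h2 with rfl | rfl
          · exact h9
          · exact h8
        exact .inr ⟨_, _, h3.cStar _ _, h10.cStep _ _,
          .inl ⟨p, [], _, _, .inl rfl, hγ, h4, hw.trans (hw'.trans h6.symm), rfl, rfl⟩,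
          .inl ⟨p, [], _, _, .inl rfl, hγ₁, h5, h7.symm, rfl, rfl⟩⟩
    · obtain ⟨c, γ₀, r, h, hc, rfl⟩ := hθ
      obtain ⟨rfl, rfl⟩ : .Gv = c ∧ γ = γ₀ := by simpa using h
      refine .inr ⟨_, _, .refl, (hc.thStep γ').cStep _ _, .inl hR', .inl ?_⟩
      cases hc with
      | gvT i =>
        exact ⟨p, [.Gv], .V i :: γ, .V i :: γ', .inr (.inl rfl), by simpa [Dat] using hγ,
          by simpa [Dat] using hγ', by simp [hw], rfl, rfl⟩
      | gvE => exact ⟨p, [], γ, γ', .inl rfl, hγ, hγ', hw, rfl, rfl⟩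
      | gvV => exact ⟨p, [.Z], γ, γ', .inr (.inr rfl), hγ, hγ', hw, rfl, rfl⟩
    · obtain ⟨c, γ₀, r, h, hc, rfl⟩ := hθ
      obtain ⟨rfl, rfl⟩ : .Z = c ∧ γ = γ₀ := by simpa using h
      refine .inr ⟨_, _, .refl, (hc.thStep γ').cStep _ _, .inl hR', .inl ?_⟩
      cases hc <;> exact ⟨p, [], γ, γ', .inl rfl, hγ, hγ', hw, rfl, rfl⟩

/-- Two threads of `U`s and `V`s with the same letters and the same indices. -/
structure Same (u v : Fin n → List α) (γ γ' : List (Cst n α)) : Prop where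
  left : ∀ c ∈ γ, IsUV c
  right : ∀ c ∈ γ', IsUV c
  lets : (obsI u v).word γ = (obsI u v).word γ'
  idxs : (obsS u v).word γ = (obsS u v).word γ'

theorem Same.symm {γ γ' : List (Cst n α)} (h : Same u v γ γ') : Same u v γ' γ :=
  ⟨h.right, h.left, h.lets.symm, h.idxs.symm⟩

theorem Same.cons {γ γ' : List (Cst n α)} (h : Same u v γ γ') (i : Fin n) :
    Same u v (.V i :: γ) (.V i :: γ') := by
  refine ⟨?_, ?_, by simp [h.lets], by simp [h.idxs]⟩
  · simpa [IsUV] using h.left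
  · simpa [IsUV] using h.right

theorem Same.dat {γ γ' : List (Cst n α)} (h : Same u v γ γ') :
    (∀ c ∈ γ, Dat c) ∧ ∀ c ∈ γ', Dat c :=
  ⟨fun c hc => (h.left c hc).dat, fun c hc => (h.right c hc).dat⟩

theorem Same.nm {γ γ' : List (Cst n α)} (h : Same u v γ γ') :
    (∀ c ∈ γ, NM c) ∧ ∀ c ∈ γ', NM c :=
  ⟨fun c hc => (h.left c hc).dat.nm, fun c hc => (h.right c hc).dat.nm⟩

theorem Same.brI {γ γ' pre : List (Cst n α)} (h : Same u v γ γ') (hpre : Pre pre) (p) :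
    CBr u v (.I, p + tm (pre ++ γ)) (.I, p + tm (pre ++ γ')) :=
  (obsI u v).br hpre h.dat.1 h.dat.2 h.lets p

theorem Same.brS {γ γ' pre : List (Cst n α)} (h : Same u v γ γ') (hpre : Pre pre) (p) :
    CBr u v (.S, p + tm (pre ++ γ)) (.S, p + tm (pre ++ γ')) :=
  (obsS u v).br hpre h.dat.1 h.dat.2 h.idxs p

/-- In mode `C`, threads `Z γ` and `Z γ'` with the same letters and indices are
interchangeable. -/
theorem Same.brZ {γ γ' : List (Cst n α)} (h : Same u v γ γ') (p) :
    CBr u v (.C, p + tm (.Z :: γ)) (.C, p + tm (.Z :: γ')) := by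
  let R : Cfg n α → Cfg n α → Prop := fun s t => ∃ p γ γ', Same u v γ γ' ∧
    s = (.C, p + tm (.Z :: γ)) ∧ t = (.C, p + tm (.Z :: γ'))
  refine BrBisim.upto_symm R ?_ ?_ (⟨p, γ, γ', h, rfl, rfl⟩ : R _ _)
  · rintro s t ⟨p, γ, γ', h, rfl, rfl⟩
    exact ⟨p, γ', γ, h.symm, rfl, rfl⟩
  clear h p γ γ'
  rintro s t hR ℓ s' hs
  have hR' := hR
  obtain ⟨p, γ, γ', h, rfl, rfl⟩ := hR
  rcases hs.cases_add with ⟨m', q, hm, rfl⟩ | ⟨p', hp, rfl⟩ | ⟨θ', hθ, rfl⟩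
  · refine .inr ⟨_, _, .refl, hm.cStep_add p _, .inl hR', ?_⟩
    cases hm with
    | cI => exact .inr (h.brI (pre := [.Z]) (.inr (.inr rfl)) _)
    | cS => exact .inr (h.brS (pre := [.Z]) (.inr (.inr rfl)) _)
    | cG => exact .inl ⟨_, γ, γ', h, rfl, rfl⟩
    | cGv => exact .inl ⟨_, γ, γ', h, rfl, rfl⟩
  · exact .inr ⟨_, _, .refl, (hp.add _).cStep _, .inl hR', .inl ⟨p', γ, γ', h, rfl, rfl⟩⟩
  · obtain ⟨c, γ₀, r, he, hc, rfl⟩ := hθ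
    obtain ⟨rfl, rfl⟩ : .Z = c ∧ γ = γ₀ := by simpa using he
    refine .inr ⟨_, _, .refl, (hc.thStep γ').cStep _ _, .inl hR', .inr ?_⟩
    cases hc <;> exact .of_cycle
      ((CStar.drop h.nm.1 _ _).trans (CStar.spawnC h.right _))
      ((CStar.drop h.nm.2 _ _).trans (CStar.spawnC h.left _))

/-- The states of mode `C` that cannot be told apart from `C ‖ p`: those on a silent cycle
with it, and those with an additional thread `Gv γ` where `γ` looks like a product of `V`s. -/
def ClassC (u v : Fin n → List α) (p : Multiset (List (Cst n α))) (s : Cfg n α) : Prop :=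
  (CStar u v s (.C, p) ∧ CStar u v (.C, p) s) ∨
    ∃ γ y, Same u v γ (vs y) ∧ s = (.C, p + tm (.Gv :: γ))

theorem nm_Gv {γ : List (Cst n α)} (h : ∀ c ∈ γ, NM c) : ∀ c ∈ Cst.Gv :: γ, NM c :=
  nm_append (γ := [.Gv]) (by simp [NM]) h

theorem ClassC.star {p : Multiset (List (Cst n α))} {s} (h : ClassC u v p s) :
    CStar u v s (.C, p) := by
  rcases h with h | ⟨γ, y, h, rfl⟩
  · exact h.1
  · exact CStar.drop (nm_Gv h.nm.1) _ _

theorem ClassC.vs (p : Multiset (List (Cst n α))) (y : List (Fin n)) :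
    ClassC u v p (.C, p + tm (.Gv :: _root_.vs y)) :=
  .inl ⟨CStar.drop (nm_Gv fun c hc => (dat_vs y c hc).nm) _ _, CStar.spawnCGv y p⟩

theorem ClassC.br {p : Multiset (List (Cst n α))} {s t} (hs : ClassC u v p s)
    (ht : ClassC u v p t) : CBr u v s t := by
  refine BrBisim.upto_symm (fun s t => ∃ p, ClassC u v p s ∧ ClassC u v p t) ?_ ?_ ⟨p, hs, ht⟩
  · rintro s t ⟨p, hs, ht⟩
    exact ⟨p, ht, hs⟩
  clear hs ht p s t
  rintro s t ⟨p, hs, ht⟩ ℓ s' hstep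
  have hs' := hs
  rcases hs with hs | ⟨γ, y, h, rfl⟩
  · exact .inr ⟨s, s', ht.star.trans hs.2, hstep, .inr (.refl _), .inr (.refl _)⟩
  -- unless it stays put, `t` answers from the state `C ‖ p ‖ Gv V_y` on its silent cycle
  have hgo : CStar u v t (.C, p + tm (.Gv :: _root_.vs y)) := ht.star.trans (CStar.spawnCGv y p)
  have hgo' := ClassC.vs (u := u) (v := v) p y
  rcases hstep.cases_add with ⟨m', q, hm, rfl⟩ | ⟨p', hp, rfl⟩ | ⟨θ', hθ, rfl⟩
  · refine .inr ⟨_, _, hgo, hm.cStep_add p _, .inl ⟨p, hs', hgo'⟩, ?_⟩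
    cases hm with
    | cI => exact .inr (h.brI (pre := [.Gv]) (.inr (.inl rfl)) _)
    | cS => exact .inr (h.brS (pre := [.Gv]) (.inr (.inl rfl)) _)
    | cG => exact .inl ⟨_, .inr ⟨γ, y, h, rfl⟩, .vs _ y⟩
    | cGv => exact .inl ⟨_, .inr ⟨γ, y, h, rfl⟩, .vs _ y⟩
  · exact .inr ⟨_, _, hgo, (hp.add _).cStep _, .inl ⟨p, hs', hgo'⟩,
      .inl ⟨p', .inr ⟨γ, y, h, rfl⟩, .vs _ y⟩⟩
  · obtain ⟨c, γ₀, r, he, hc, rfl⟩ := hθ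
    obtain ⟨rfl, rfl⟩ : .Gv = c ∧ γ = γ₀ := by simpa using he
    cases hc with
    | gvT i => exact .inl ⟨rfl, .inl ⟨p, .inr ⟨.V i :: γ, i :: y, h.cons i, rfl⟩, ht⟩⟩
    | gvE =>
      exact .inl ⟨rfl, .inl ⟨p, .inl ⟨CStar.drop h.nm.1 _ _, CStar.spawnC h.left _⟩, ht⟩⟩
    | gvV =>
      exact .inr ⟨_, _, hgo, (TStep.gvV.thStep _).cStep _ _, .inl ⟨p, hs', hgo'⟩,
        .inr (h.brZ p)⟩

/-- `w` solves the equation of the instance; the empty word is allowed. -/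
def Good (u v : Fin n → List α) (w : List (Fin n)) : Prop := w.flatMap u = w.flatMap v

theorem obsI_vs (x : List (Fin n)) : (obsI u v).word (vs x) = x.flatMap v := by
  simp [Obs.word, List.flatMap_map, obsI, lets]

theorem obsI_us (x : List (Fin n)) : (obsI u v).word (us x) = x.flatMap u := by
  simp [Obs.word, List.flatMap_map, obsI, lets]

theorem obsS_vs (x : List (Fin n)) : (obsS u v).word (vs x) = x := by
  simp [Obs.word, List.flatMap_map, obsS, idxs]

theorem obsS_us (x : List (Fin n)) : (obsS u v).word (us x) = x := by
  simp [Obs.word, List.flatMap_map, obsS, idxs]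

theorem Good.same {w : List (Fin n)} (h : Good u v w) (x : List (Fin n)) :
    Same u v (vs x ++ us w) (vs (x ++ w)) := by
  refine ⟨?_, ?_, ?_, ?_⟩
  · intro c hc
    rcases List.mem_append.1 hc with hc | hc
    · obtain ⟨i, -, rfl⟩ := List.mem_map.1 hc
      exact .inr ⟨i, rfl⟩
    · obtain ⟨i, -, rfl⟩ := List.mem_map.1 hc
      exact .inl ⟨i, rfl⟩
  · intro c hc
    obtain ⟨i, -, rfl⟩ := List.mem_map.1 hc
    exact .inr ⟨i, rfl⟩
  · rw [Obs.word_append, obsI_vs, obsI_us, obsI_vs, List.flatMap_append, h]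
  · rw [Obs.word_append, obsS_vs, obsS_us, obsS_vs]

/-- In mode `D`, threads `Gv V_x U_w₁` and `Gv V_y U_w₂` cannot be told apart when `w₁` and `w₂`
solve the equation of the instance. -/
theorem Good.br {w₁ w₂ : List (Fin n)} (h₁ : Good u v w₁) (h₂ : Good u v w₂)
    (x y : List (Fin n)) (p) :
    CBr u v (.D, p + tm (.Gv :: (vs x ++ us w₁))) (.D, p + tm (.Gv :: (vs y ++ us w₂))) := by
  let R : Cfg n α → Cfg n α → Prop := fun s t => ∃ p x y w₁ w₂, Good u v w₁ ∧ Good u v w₂ ∧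
    s = (.D, p + tm (.Gv :: (vs x ++ us w₁))) ∧ t = (.D, p + tm (.Gv :: (vs y ++ us w₂)))
  refine BrBisim.upto_symm R ?_ ?_ (⟨p, x, y, w₁, w₂, h₁, h₂, rfl, rfl⟩ : R _ _)
  · rintro s t ⟨p, x, y, w₁, w₂, h₁, h₂, rfl, rfl⟩
    exact ⟨p, y, x, w₂, w₁, h₂, h₁, rfl, rfl⟩
  clear h₁ h₂ x y p w₁ w₂
  rintro s t hR ℓ s' hs
  have hR' := hR
  obtain ⟨p, x, y, w₁, w₂, h₁, h₂, rfl, rfl⟩ := hR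
  rcases hs.cases_add with ⟨m', q, hm, rfl⟩ | ⟨p', hp, rfl⟩ | ⟨θ', hθ, rfl⟩
  · refine .inr ⟨_, _, .refl, hm.cStep_add p _, .inl hR', ?_⟩
    cases hm with
    | dT => exact .inl ⟨_, x, y, w₁, w₂, h₁, h₂, rfl, rfl⟩
    | dD => exact .inr (ClassC.br (.inr ⟨_, _, h₁.same x, rfl⟩) (.inr ⟨_, _, h₂.same y, rfl⟩))
  · exact .inr ⟨_, _, .refl, (hp.add _).cStep _, .inl hR',
      .inl ⟨p', x, y, w₁, w₂, h₁, h₂, rfl, rfl⟩⟩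
  · obtain ⟨c, γ₀, r, he, hc, rfl⟩ := hθ
    obtain ⟨rfl, rfl⟩ : .Gv = c ∧ vs x ++ us w₁ = γ₀ := by simpa using he
    have hn₁ := (h₁.same x).nm.1
    have hn₂ := (h₂.same y).nm.1
    cases hc with
    | gvT i => exact .inl ⟨rfl, .inl ⟨p, i :: x, y, w₁, w₂, h₁, h₂, rfl, rfl⟩⟩
    | gvE =>
      exact .inr ⟨_, _, .refl, (TStep.gvE.thStep _).cStep _ _, .inl hR', .inr (.of_cycle
        ((CStar.drop hn₁ _ _).trans (CStar.spawnD y w₂ _))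
        ((CStar.drop hn₂ _ _).trans (CStar.spawnD x w₁ _)))⟩
    | gvV =>
      have hz : ∀ c ∈ [Cst.Z (n := n) (α := α)], NM c := by simp [NM]
      exact .inr ⟨_, _, .refl, (TStep.gvV.thStep _).cStep _ _, .inl hR', .inr (.of_cycle
        ((CStar.drop (nm_append hz hn₁) _ _).trans (CStar.spawnDZ y w₂ _))
        ((CStar.drop (nm_append hz hn₂) _ _).trans (CStar.spawnDZ x w₁ _)))⟩

theorem PStep.ne_zero {ℓ p} (h : PStep u v 0 ℓ p) : False := by
  obtain ⟨p₀, θ, θ', h, hθ, -⟩ := h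
  rw [tm_of_ne_nil hθ.ne_nil] at h
  simpa using congrArg Multiset.card h

/-- A nonempty solution makes the two initial configurations branching bisimilar. -/
theorem Good.br_XY {w : List (Fin n)} (hw : Good u v w) (hne : w ≠ []) :
    CBr u v (.X, 0) (.Y, 0) := by
  have hY : CStep u v (.Y, 0) .tau (.D, 0) := MStep.yT.cStep 0
  have hX : CStep u v (.X, 0) .tau (.D, 0) := MStep.xT.cStep 0
  refine BrBisim.upto (fun s t => s = (.X, 0) ∧ CStar u v t (.D, 0) ∧
    (CStar u v (.D, 0) t ∨ t = (.Y, 0))) ?_ ⟨rfl, .single hY, .inr rfl⟩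
  rintro s t ⟨rfl, h1, h2⟩
  constructor
  · intro ℓ s' hs
    rcases hs.cases with ⟨m', q, hm, rfl⟩ | ⟨p', hp, rfl⟩
    · cases hm with
      | xU =>
        obtain ⟨i, w, rfl⟩ := List.exists_cons_of_ne_nil hne
        have hn : ∀ c ∈ Cst.Gu :: us (α := α) w, NM c :=
          nm_append (γ := [.Gu]) (by simp [NM]) fun c hc => (dat_us w c hc).nm
        refine .inr ⟨_, _, h1.trans (CStar.spawnDGu w 0), ((TStep.guU i).thStep _).cStep _ _,
          .inl ⟨rfl, CStar.drop hn _ _, .inl (CStar.spawnDGu w 0)⟩, .inr ?_⟩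
        exact Good.br (u := u) (v := v) (w₁ := []) rfl hw [] [] 0
      | xT =>
        rcases h2 with h2 | rfl
        · exact .inl ⟨rfl, .inr (.of_cycle h2 h1)⟩
        · exact .inr ⟨_, _, .refl, hY, .inl ⟨rfl, h1, .inr rfl⟩, .inr (.refl _)⟩
    · exact hp.ne_zero.elim
  · intro ℓ t' ht
    rcases h2 with h2 | rfl
    · exact .inr ⟨t, t', ReflTransGen.head hX h2, ht, .inr (.refl _), .inr (.refl _)⟩
    · rcases ht.cases with ⟨m', q, hm, rfl⟩ | ⟨p', hp, rfl⟩
      · cases hm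
        exact .inl ⟨rfl, .inl ⟨rfl, .refl, .inl .refl⟩⟩
      · exact hp.ne_zero.elim

end Forward

/-! ### Weakly bisimilar threads carry the same words -/

section Words
variable {n : ℕ} {α : Type} {u v : Fin n → List α}

theorem CStep.single {m : Mode} {θ : List (Cst n α)} {ℓ s'} (h : CStep u v (m, tm θ) ℓ s') :
    (∃ m' q, MStep m ℓ m' q ∧ s' = (m', tm θ + q)) ∨
      ∃ θ', ThStep u v θ ℓ θ' ∧ s' = (m, tm θ') := by
  rw [← zero_add (tm θ)] at h
  rcases h.cases_add with ⟨m', q, hm, rfl⟩ | ⟨p', hp, rfl⟩ | ⟨θ', hθ, rfl⟩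
  · exact .inl ⟨m', q, hm, by simp [add_comm]⟩
  · exact hp.ne_zero.elim
  · exact .inr ⟨θ', hθ, by simp⟩

theorem ThStep.single {θ θ' : List (Cst n α)} {ℓ} (h : ThStep u v θ ℓ θ') (m) :
    CStep u v (m, tm θ) ℓ (m, tm θ') := by
  simpa using h.cStep m 0

theorem ThStar.single {θ θ' : List (Cst n α)} (h : ThStar u v θ θ') (m) :
    CStar u v (m, tm θ) (m, tm θ') := by
  simpa using h.cStar m 0

theorem ThStep.dat {θ θ' : List (Cst n α)} {ℓ} (h : ThStep u v θ ℓ θ') (hθ : ∀ c ∈ θ, Dat c) :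
    ∀ c ∈ θ', Dat c := by
  obtain ⟨c, γ, r, rfl, hc, rfl⟩ := h
  intro d hd
  rcases List.mem_append.1 hd with hd | hd
  · exact (hθ c (by simp)).step hc d hd
  · exact hθ d (by simp [hd])

variable {β : Type} (O : Obs u v β)

theorem Obs.no_tau {m' : Mode} {q} (h : MStep (n := n) (α := α) O.m .tau m' q) : False := by
  rcases (O.mode h).2 with ⟨h, -⟩ | ⟨-, h, -⟩
  · exact O.e_ne h.symm
  · exact h rfl

theorem Obs.no_lab {m' : Mode} {q x} (h : MStep O.m (O.lab x) m' q) : False := by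
  rcases (O.mode h).2 with ⟨h, -⟩ | ⟨-, -, h⟩
  · exact (O.lab_ne x).2 h
  · exact h x rfl

theorem Obs.star_single {θ : List (Cst n α)} {s'} (h : CStar u v (O.m, tm θ) s') :
    ∃ θ', ThStar u v θ θ' ∧ s' = (O.m, tm θ') := by
  induction h with
  | refl => exact ⟨θ, .refl, rfl⟩
  | tail _ h ih =>
    obtain ⟨θ', h1, rfl⟩ := ih
    rcases h.single with ⟨m', q, hm, rfl⟩ | ⟨θ'', hθ, rfl⟩
    · exact (O.no_tau hm).elim
    · exact ⟨θ'', h1.tail hθ, rfl⟩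

/-- Silent moves of a thread can only drop symbols from the front of its word. -/
theorem Obs.star_word {γ γ' : List (Cst n α)} (h : ThStar u v γ γ') (hγ : ∀ c ∈ γ, Dat c) :
    (∀ c ∈ γ', Dat c) ∧ O.word γ' <:+ O.word γ := by
  induction h with
  | refl => exact ⟨hγ, List.suffix_rfl⟩
  | tail _ h ih =>
    obtain ⟨h1, h2⟩ := ih
    refine ⟨h.dat h1, List.IsSuffix.trans ?_ h2⟩
    obtain ⟨c, γ₀, r, rfl, hc, rfl⟩ := h
    rcases O.thr (h1 c (by simp)) hc with ⟨-, h, -⟩ | ⟨x, h, -⟩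
    · rw [O.word_append, O.word_cons, ← h]
      exact List.suffix_rfl
    · rw [O.word_append, O.word_cons, h]
      exact List.suffix_cons _ _

theorem Obs.step_word {γ γ' : List (Cst n α)} {x} (h : ThStep u v γ (O.lab x) γ')
    (hγ : ∀ c ∈ γ, Dat c) : O.word γ = x :: O.word γ' := by
  obtain ⟨c, γ₀, r, rfl, hc, rfl⟩ := h
  rcases O.thr (hγ c (by simp)) hc with ⟨-, -, h⟩ | ⟨y, h, h'⟩
  · exact (h x rfl).elim
  · have : O.lab x = O.lab y := h'.resolve_left (O.lab_ne x).1
    obtain rfl : x = y := O.lab_inj this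
    rw [O.word_append, O.word_cons, h]
    rfl

/-- The word of a thread is a trace of it, and the traces of a thread are subsequences of its
word. -/
theorem Obs.sublist {ξ : List β} : ∀ {γ γ' : List (Cst n α)}, (∀ c ∈ γ, Dat c) →
    (∀ c ∈ γ', Dat c) → O.word γ = ξ → CWk u v (O.m, tm γ) (O.m, tm γ') →
    ξ.Sublist (O.word γ') := by
  induction ξ with
  | nil => simp
  | cons x ξ ih =>
    intro γ γ' hγ hγ' hw h
    obtain ⟨γ₂, γ₃, h1, -, h3, -, h5, h6, -⟩ := O.expose hγ hw
    obtain ⟨t, h7, h8⟩ := h.star (h1.single O.m)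
    obtain ⟨t₁, t₂, t₃, h9, h10, h11, h12⟩ := h8.step (h6.single O.m) (O.lab_ne x).1
    obtain ⟨γ₁', h13, rfl⟩ := O.star_single (h7.trans h9)
    obtain ⟨h14, h15⟩ := O.star_word h13 hγ'
    rcases h10.single with ⟨m', q, hm, rfl⟩ | ⟨γ₂', hθ, rfl⟩
    · exact (O.no_lab hm).elim
    obtain ⟨γ₃', h16, rfl⟩ := O.star_single h11
    obtain ⟨h17, h18⟩ := O.star_word h16 (hθ.dat h14)
    rw [O.step_word hθ h14] at h15
    exact (((ih h3 h17 h5 h12).trans h18.sublist).cons_cons x).trans h15.sublist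

theorem ThStep.not_lZ {γ γ' : List (Cst n α)} (h : ThStep u v γ .lZ γ') (hγ : ∀ c ∈ γ, Dat c) :
    False := by
  obtain ⟨c, γ₀, r, rfl, hc, rfl⟩ := h
  cases hc
  exact hγ .Z (by simp)

theorem MStep.not_lZ {m m' : Mode} {q} (h : MStep (n := n) (α := α) m .lZ m' q) : False := by
  cases h

theorem ThStar.cases_Z {γ θ : List (Cst n α)} (h : ThStar u v (.Z :: γ) θ) :
    θ = .Z :: γ ∨ ThStar u v γ θ := by
  induction h with
  | refl => exact .inl rfl
  | tail _ h ih =>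
    rcases ih with rfl | ih
    · obtain ⟨c, γ₀, r, he, hc, rfl⟩ := h
      obtain ⟨rfl, rfl⟩ : .Z = c ∧ γ = γ₀ := by simpa using he
      cases hc
      exact .inr .refl
    · exact .inr (ih.tail h)

theorem Obs.sublist_Z {γ γ' : List (Cst n α)} (hγ : ∀ c ∈ γ, Dat c) (hγ' : ∀ c ∈ γ', Dat c)
    (h : CWk u v (O.m, tm (.Z :: γ)) (O.m, tm (.Z :: γ'))) :
    (O.word γ).Sublist (O.word γ') := by
  obtain ⟨t₁, t₂, t₃, h1, h2, h3, h4⟩ := h.step ((TStep.zZ.thStep γ).single O.m) (by simp)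
  obtain ⟨θ₁, h5, rfl⟩ := O.star_single h1
  rcases h2.single with ⟨m', q, hm, rfl⟩ | ⟨θ₂, hθ, rfl⟩
  · exact hm.not_lZ.elim
  rcases h5.cases_Z with rfl | h5
  · obtain ⟨c, γ₀, r, he, hc, rfl⟩ := hθ
    obtain ⟨rfl, rfl⟩ : .Z = c ∧ γ' = γ₀ := by simpa using he
    cases hc
    obtain ⟨θ₃, h6, rfl⟩ := O.star_single h3
    obtain ⟨h7, h8⟩ := O.star_word h6 hγ'
    exact (O.sublist hγ h7 rfl h4).trans h8.sublist
  · exact (hθ.not_lZ (O.star_word h5 hγ').1).elim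

theorem Obs.word_eq {γ γ' : List (Cst n α)} (hγ : ∀ c ∈ γ, Dat c) (hγ' : ∀ c ∈ γ', Dat c)
    (h : CWk u v (O.m, tm (.Z :: γ)) (O.m, tm (.Z :: γ'))) : O.word γ = O.word γ' :=
  (O.sublist_Z hγ hγ' h).antisymm (O.sublist_Z hγ' hγ h.symm)

end Words

/-! ### Weak bisimilarity of `X` and `Y` yields a solution -/

section Backward
variable {n : ℕ} {α : Type} {u v : Fin n → List α}

/-- All threads of the pool are nonempty and satisfy `J`. -/
def All (J : List (Cst n α) → Prop) (p : Multiset (List (Cst n α))) : Prop :=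
  ∀ θ ∈ p, θ ≠ [] ∧ J θ

theorem All.zero (J : List (Cst n α) → Prop) : All J 0 := by simp [All]

theorem All.add {J : List (Cst n α) → Prop} {p q} (hp : All J p) (hq : All J q) :
    All J (p + q) := by
  intro θ hθ
  rcases Multiset.mem_add.1 hθ with h | h
  · exact hp θ h
  · exact hq θ h

theorem All.tm {J : List (Cst n α) → Prop} {θ} (h : J θ) : All J (tm θ) := by
  cases θ <;> simp [All, h]

theorem All.step {J : List (Cst n α) → Prop} {p p' ℓ} (hp : All J p) (h : PStep u v p ℓ p') :
    ∃ p₀ θ θ', All J p₀ ∧ J θ ∧ ThStep u v θ ℓ θ' ∧ p' = p₀ + _root_.tm θ' := by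
  obtain ⟨p₀, θ, θ', rfl, hθ, rfl⟩ := h
  refine ⟨p₀, θ, θ', fun θ h => hp θ (by simp [h]), (hp θ ?_).2, hθ, rfl⟩
  rw [tm_of_ne_nil hθ.ne_nil]
  simp

theorem All.erase {J : List (Cst n α) → Prop} {p} (hJ : ∀ θ, J θ → ∀ c ∈ θ, NM c)
    (hp : All J p) : PStar u v p 0 :=
  PStar.erase fun θ hθ => ⟨(hp θ hθ).1, hJ θ (hp θ hθ).2⟩

/-- Data threads, possibly led by one of the constants in `L`. -/
def Led (L : Cst n α → Prop) (θ : List (Cst n α)) : Prop :=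
  (∀ c ∈ θ, Dat c) ∨ ∃ c γ, θ = c :: γ ∧ L c ∧ ∀ d ∈ γ, Dat d

theorem Led.nm {L : Cst n α → Prop} (hL : ∀ c, L c → NM c) {θ} (h : Led L θ) :
    ∀ c ∈ θ, NM c := by
  rcases h with h | ⟨c, γ, rfl, hc, hγ⟩
  · exact fun c hc => (h c hc).nm
  · exact nm_append (γ := [c]) (by simpa using hL c hc) fun d hd => (hγ d hd).nm

/-- If the leading constants in `L` evolve only into leading constants in `L` and data, then
so do the threads led by `L`. -/
theorem Led.step {L : Cst n α → Prop} {ℓ}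
    (hL : ∀ c r, L c → TStep u v c ℓ r → Led L r) {θ θ'}
    (h : Led L θ) (hs : ThStep u v θ ℓ θ') : Led L θ' := by
  rcases h with h | ⟨c, γ, rfl, hc, hγ⟩
  · exact .inl (hs.dat h)
  · obtain ⟨c', γ', r, he, hr, rfl⟩ := hs
    obtain ⟨rfl, rfl⟩ : c = c' ∧ γ = γ' := by simpa using he
    rcases hL c r hc hr with h | ⟨d, δ, rfl, hd, hδ⟩
    · left
      simpa [or_imp, forall_and] using ⟨h, hγ⟩
    · refine .inr ⟨d, δ ++ γ, rfl, hd, ?_⟩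
      simpa [or_imp, forall_and] using ⟨hδ, hγ⟩

/-! #### States without the label `λ_Z` -/

/-- Threads that contain no `Z` and can silently produce none. -/
abbrev NoZ : List (Cst n α) → Prop := Led fun c => c = .Gv ∨ c = .G

theorem NoZ.nm {θ : List (Cst n α)} (h : NoZ θ) : ∀ c ∈ θ, NM c :=
  Led.nm (by rintro c (rfl | rfl) <;> simp [NM]) h

theorem NoZ.step {θ θ' : List (Cst n α)} (h : NoZ θ) (hs : ThStep u v θ .tau θ') : NoZ θ' := by
  refine Led.step ?_ h hs
  rintro c r (rfl | rfl) hr <;> cases hr <;> simp [Led, Dat]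

theorem NoZ.not_lZ {θ θ' : List (Cst n α)} (h : NoZ θ) (hs : ThStep u v θ .lZ θ') : False := by
  rcases h with h | ⟨c, γ, rfl, hc, hγ⟩
  · exact hs.not_lZ h
  · obtain ⟨c', γ', r, he, hr, rfl⟩ := hs
    obtain ⟨rfl, rfl⟩ : c = c' ∧ γ = γ' := by simpa using he
    rcases hc with rfl | rfl <;> cases hr

/-- Modes whose silent moves keep the mode and spawn no thread that could produce a `Z`. -/
def Calm (n : ℕ) (α : Type) (m : Mode) : Prop :=
  ∀ m' q, MStep (n := n) (α := α) m .tau m' q → m' = m ∧ All NoZ q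

theorem Calm.C : Calm n α .C := by
  rintro m' q ⟨⟩ <;> simp [All, Led]

theorem Obs.calm {β : Type} (O : Obs u v β) : Calm n α O.m :=
  fun _ _ h => (O.no_tau h).elim

/-- A state that cannot perform `λ_Z`, not even after silent moves. -/
def Lost (m : Mode) (s : Cfg n α) : Prop := ∃ p, All NoZ p ∧ s = (m, p)

theorem Lost.star {m : Mode} (hm : Calm n α m) {s s' : Cfg n α} (h : Lost m s)
    (hs : CStar u v s s') : Lost m s' := by
  induction hs with
  | refl => exact h
  | tail _ hs ih =>
    obtain ⟨p, hp, rfl⟩ := ih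
    rcases hs.cases with ⟨m', q, hq, rfl⟩ | ⟨p', hp', rfl⟩
    · obtain ⟨rfl, hq'⟩ := hm _ _ hq
      exact ⟨_, hp.add hq', rfl⟩
    · obtain ⟨p₀, θ, θ', h1, h2, h3, rfl⟩ := hp.step hp'
      exact ⟨_, h1.add (.tm (h2.step h3)), rfl⟩

theorem Lost.not_lZ {m : Mode} {s s' : Cfg n α} (h : Lost m s) (hs : CStep u v s .lZ s') :
    False := by
  obtain ⟨p, hp, rfl⟩ := h
  rcases hs.cases with ⟨m', q, hq, rfl⟩ | ⟨p', hp', rfl⟩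
  · exact hq.not_lZ
  · obtain ⟨p₀, θ, θ', h1, h2, h3, rfl⟩ := hp.step hp'
    exact h2.not_lZ h3

/-- A state offering `λ_Z` is not weakly bisimilar to a lost one. -/
theorem Lost.not_wk {m : Mode} (hm : Calm n α m) {s t t' : Cfg n α} (h : Lost m s)
    (ht : CStep u v t .lZ t') (hw : CWk u v t s) : False := by
  obtain ⟨s₁, s₂, s₃, h1, h2, -⟩ := hw.step ht (by simp)
  exact (h.star hm h1).not_lZ h2

/-- A state with exactly one `Z`, namely in the thread `Z γ`. -/
def HasZ (m : Mode) (γ : List (Cst n α)) (s : Cfg n α) : Prop :=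
  ∃ p, All NoZ p ∧ s = (m, p + tm (.Z :: γ))

theorem HasZ.star {m : Mode} (hm : Calm n α m) {γ : List (Cst n α)} (hγ : ∀ c ∈ γ, Dat c)
    {s s' : Cfg n α} (h : HasZ m γ s) (hs : CStar u v s s') : HasZ m γ s' ∨ Lost m s' := by
  induction hs with
  | refl => exact .inl h
  | tail _ hs ih =>
    rcases ih with ⟨p, hp, rfl⟩ | ih
    · rcases hs.cases_add with ⟨m', q, hq, rfl⟩ | ⟨p', hp', rfl⟩ | ⟨θ', hθ, rfl⟩
      · obtain ⟨rfl, hq'⟩ := hm _ _ hq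
        exact .inl ⟨_, hp.add hq', rfl⟩
      · obtain ⟨p₀, θ, θ', h1, h2, h3, rfl⟩ := hp.step hp'
        exact .inl ⟨_, h1.add (.tm (h2.step h3)), rfl⟩
      · obtain ⟨c, γ₀, r, he, hc, rfl⟩ := hθ
        obtain ⟨rfl, rfl⟩ : .Z = c ∧ γ = γ₀ := by simpa using he
        cases hc
        exact .inr ⟨_, hp.add (.tm (.inl hγ)), rfl⟩
    · exact .inr (ih.star hm (.single hs))

theorem Z_single (m : Mode) (γ : List (Cst n α)) :
    CStep u v (m, tm (.Z :: γ)) .lZ (m, tm γ) := (TStep.zZ.thStep γ).single m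

/-- Weakly bisimilar states of mode `C` with threads `Z γ` and `Z γ'` remain weakly bisimilar
in the observing modes, so `γ` and `γ'` have the same observable words. -/
theorem Obs.word_eq_of_C {β : Type} (O : Obs u v β) {γ γ' : List (Cst n α)}
    (hγ : ∀ c ∈ γ, Dat c) (hγ' : ∀ c ∈ γ', Dat c) {t : Cfg n α} (ht : HasZ .C γ' t)
    (h : CWk u v (.C, tm (.Z :: γ)) t) : O.word γ = O.word γ' := by
  have he : CStep u v (.C, tm (.Z :: γ)) O.e (O.m, tm (.Z :: γ)) := by
    simpa using O.entry.cStep (u := u) (v := v) (tm (.Z :: γ))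
  obtain ⟨t₁, t₂, t₃, h1, h2, h3, h4⟩ := h.step he O.e_ne
  have hthr : ∀ {p p'}, ¬ PStep u v p O.e p' := by
    rintro p p' ⟨p₀, _, _, -, ⟨c, γ₀, r, -, hc, -⟩, -⟩
    exact O.thr_ne hc
  have h5 : HasZ O.m γ' t₂ ∨ Lost O.m t₂ := by
    rcases ht.star Calm.C hγ' h1 with ⟨p, hp, rfl⟩ | ⟨p, hp, rfl⟩
    · rcases h2.cases with ⟨m', q, hq, rfl⟩ | ⟨p', hp', rfl⟩
      · obtain ⟨rfl, rfl⟩ := O.entry_uniq hq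
        exact .inl ⟨p, hp, by simp⟩
      · exact (hthr hp').elim
    · rcases h2.cases with ⟨m', q, hq, rfl⟩ | ⟨p', hp', rfl⟩
      · obtain ⟨rfl, rfl⟩ := O.entry_uniq hq
        exact .inr ⟨p, hp, by simp⟩
      · exact (hthr hp').elim
  have h6 : HasZ O.m γ' t₃ := by
    rcases h5 with h5 | h5
    · exact (h5.star O.calm hγ' h3).resolve_right
        fun hl => hl.not_wk O.calm (Z_single O.m γ) h4
    · exact ((h5.star O.calm h3).not_wk O.calm (Z_single O.m γ) h4).elim
  obtain ⟨p, hp, rfl⟩ := h6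
  have h7 : CStar u v (O.m, p + tm (.Z :: γ')) (O.m, tm (.Z :: γ')) := by
    have := (hp.erase (u := u) (v := v) fun θ => NoZ.nm).add (tm (.Z :: γ'))
    simpa using this.cStar O.m
  obtain ⟨s, h8, h9⟩ := h4.symm.star h7
  obtain ⟨θ, h10, rfl⟩ := O.star_single h8
  rcases h10.cases_Z with rfl | h10
  · exact O.word_eq hγ hγ' h9.symm
  · have : Lost O.m (O.m, tm θ) := ⟨_, .tm (.inl (O.star_word h10 hγ).1), rfl⟩
    exact (this.not_wk O.calm (Z_single O.m γ') h9).elim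

/-! #### The answer to `λ_U` -/

/-- Threads reachable in mode `D` from `Y` before the label `λ_U`. -/
def DTh (θ : List (Cst n α)) : Prop :=
  (∃ w, θ = .Gu :: us w) ∨ Led (fun c => c = .Gv' ∨ c = .Z) θ

theorem DTh.nm {θ : List (Cst n α)} (h : DTh θ) : ∀ c ∈ θ, NM c := by
  rcases h with ⟨w, rfl⟩ | h
  · exact nm_append (γ := [.Gu]) (by simp [NM]) fun c hc => (dat_us w c hc).nm
  · exact Led.nm (by rintro c (rfl | rfl) <;> simp [NM]) h

theorem DTh.step {θ θ' : List (Cst n α)} (h : DTh θ) (hs : ThStep u v θ .tau θ') : DTh θ' := by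
  rcases h with ⟨w, rfl⟩ | h
  · obtain ⟨c, γ, r, he, hc, rfl⟩ := hs
    obtain ⟨rfl, rfl⟩ : .Gu = c ∧ us w = γ := by simpa using he
    cases hc with
    | guT i => exact .inl ⟨i :: w, rfl⟩
    | guGv' => exact .inr (.inr ⟨_, _, rfl, .inl rfl, dat_us w⟩)
  · right
    refine Led.step ?_ h hs
    rintro c r (rfl | rfl) hr <;> cases hr <;> simp [Led, Dat]

theorem DTh.step_lU {θ θ' : List (Cst n α)} (h : DTh θ) (hs : ThStep u v θ .lU θ') :
    ∃ w, w ≠ [] ∧ θ' = .Gv :: us w := by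
  obtain ⟨c, γ, r, rfl, hc, rfl⟩ := hs
  cases hc with
  | guU i =>
    rcases h with ⟨w, h⟩ | h | ⟨c, γ', h, h', -⟩
    · obtain rfl : γ = us w := by simpa using h
      exact ⟨i :: w, by simp, rfl⟩
    · exact (h .Gu (by simp)).elim
    · obtain ⟨rfl, rfl⟩ : .Gu = c ∧ γ = γ' := by simpa using h
      simp at h'

theorem DTh.not_lV {θ θ' : List (Cst n α)} (h : DTh θ) (hs : ThStep u v θ .lV θ') : False := by
  obtain ⟨c, γ, r, rfl, hc, rfl⟩ := hs
  cases hc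
  rcases h with ⟨w, h⟩ | h | ⟨c, γ', h, hL, -⟩
  · simp at h
  · exact h .Gv (by simp)
  · obtain ⟨rfl, rfl⟩ : .Gv = c ∧ γ = γ' := by simpa using h
    simp at hL

/-- States reachable silently in mode `D` before `λ_U`, or after it once `Gv` is gone. -/
def DSt (s : Cfg n α) : Prop := ∃ p, All DTh p ∧ s = (.D, p)

theorem All.DTh_Gu : All DTh ({[.Gu]} : Multiset (List (Cst n α))) := by
  intro θ hθ
  obtain rfl : θ = [.Gu] := by simpa using hθ
  exact ⟨by simp, .inl ⟨[], rfl⟩⟩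

theorem DSt.step {s s' : Cfg n α} (h : DSt s) (hs : CStep u v s .tau s') : DSt s' := by
  obtain ⟨p, hp, rfl⟩ := h
  rcases hs.cases with ⟨m', q, hq, rfl⟩ | ⟨p', hp', rfl⟩
  · cases hq
    exact ⟨_, hp.add .DTh_Gu, rfl⟩
  · obtain ⟨p₀, θ, θ', h1, h2, h3, rfl⟩ := hp.step hp'
    exact ⟨_, h1.add (.tm (h2.step h3)), rfl⟩

theorem DSt.star {s s' : Cfg n α} (h : DSt s) (hs : CStar u v s s') : DSt s' := by
  induction hs with
  | refl => exact h
  | tail _ hs ih => exact ih.step hs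

theorem DSt.of_Y {s : Cfg n α} (hs : CStar u v (.Y, 0) s) : s = (.Y, 0) ∨ DSt s := by
  rcases ReflTransGen.cases_head hs with rfl | ⟨t, h1, h2⟩
  · exact .inl rfl
  · right
    rcases h1.cases with ⟨m', q, hq, rfl⟩ | ⟨p', hp', rfl⟩
    · cases hq
      exact DSt.star ⟨0, .zero _, rfl⟩ h2
    · exact hp'.ne_zero.elim

theorem dat_vs_us (x w : List (Fin n)) : ∀ c ∈ vs (α := α) x ++ us w, Dat c := by
  intro c hc
  rcases List.mem_append.1 hc with hc | hc
  · exact dat_vs x c hc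
  · exact dat_us w c hc

/-- States with a thread `Gv V_x U_w` in mode `D`, where `w` is nonempty. -/
def DGv (s : Cfg n α) : Prop :=
  ∃ p x w, w ≠ [] ∧ All DTh p ∧ s = (.D, p + tm (.Gv :: (vs x ++ us w)))

theorem DGv.star {s s' : Cfg n α} (h : DGv s) (hs : CStar u v s s') : DGv s' ∨ DSt s' := by
  induction hs with
  | refl => exact .inl h
  | tail _ hs ih =>
    rcases ih with ⟨p, x, w, hw, hp, rfl⟩ | ih
    · rcases hs.cases_add with ⟨m', q, hq, rfl⟩ | ⟨p', hp', rfl⟩ | ⟨θ', hθ, rfl⟩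
      · cases hq
        exact .inl ⟨_, x, w, hw, hp.add .DTh_Gu, rfl⟩
      · obtain ⟨p₀, θ, θ', h1, h2, h3, rfl⟩ := hp.step hp'
        exact .inl ⟨_, x, w, hw, h1.add (.tm (h2.step h3)), rfl⟩
      · obtain ⟨c, γ, r, he, hc, rfl⟩ := hθ
        obtain ⟨rfl, rfl⟩ : .Gv = c ∧ vs x ++ us w = γ := by simpa using he
        cases hc with
        | gvT i => exact .inl ⟨p, i :: x, w, hw, hp, rfl⟩
        | gvE =>
          refine .inr ⟨_, hp.add (.tm (.inr (.inl ?_))), rfl⟩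
          exact dat_vs_us x w
    · exact .inr (ih.step hs)

/-- The only answers of `Y` to `λ_U` that are weakly bisimilar to `D ‖ Gv` keep a thread
`Gv V_x U_w` with `w` nonempty. -/
theorem exists_Gv (h : CWk u v (.X, 0) (.Y, 0)) :
    ∃ x w, w ≠ [] ∧ ∃ t, CStar u v (.D, tm [.Gv]) t ∧
      CWk u v (.D, tm (.Gv :: (vs x ++ us w))) t := by
  have hX : CStep u v (.X, 0) .lU (.D, tm [.Gv]) := by
    simpa using MStep.xU.cStep (u := u) (v := v) 0
  obtain ⟨t₁, t₂, t₃, h1, h2, h3, h4⟩ := h.step hX (by simp)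
  have h5 : DGv t₂ := by
    rcases DSt.of_Y h1 with rfl | ⟨p, hp, rfl⟩
    · rcases h2.cases with ⟨m', q, hq, rfl⟩ | ⟨p', hp', rfl⟩
      · cases hq
      · exact hp'.ne_zero.elim
    · rcases h2.cases with ⟨m', q, hq, rfl⟩ | ⟨p', hp', rfl⟩
      · cases hq
      · obtain ⟨p₀, θ, θ', hp₀, hθ, hs, rfl⟩ := hp.step hp'
        obtain ⟨w, hw, rfl⟩ := hθ.step_lU hs
        exact ⟨p₀, [], w, hw, hp₀, rfl⟩
  rcases h5.star h3 with ⟨p, x, w, hw, hp, rfl⟩ | h6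
  · have h7 : CStar u v (.D, p + tm (.Gv :: (vs x ++ us w))) (.D, tm (.Gv :: (vs x ++ us w))) := by
      have := (hp.erase (u := u) (v := v) fun θ => DTh.nm).add (tm (.Gv :: (vs x ++ us w)))
      simpa using this.cStar .D
    obtain ⟨t, h8, h9⟩ := h4.symm.star h7
    exact ⟨x, w, hw, t, h8, h9⟩
  · obtain ⟨s₁, s₂, s₃, h7, h8, -⟩ := h4.step ((TStep.gvV.thStep []).single .D) (by simp)
    obtain ⟨p, hp, rfl⟩ := h6.star h7
    rcases h8.cases with ⟨m', q, hq, rfl⟩ | ⟨p', hp', rfl⟩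
    · cases hq
    · obtain ⟨p₀, θ, θ', -, hθ, hs, rfl⟩ := hp.step hp'
      exact (hθ.not_lV hs).elim

end Backward

/-! ### Reading off the solution -/

section Solution
variable {n : ℕ} {α : Type} {u v : Fin n → List α}

/-- Threads `Gv V_y`, and data threads possibly led by a constant in `L`. -/
def VTh (L : Cst n α → Prop) (θ : List (Cst n α)) : Prop :=
  Led L θ ∨ ∃ y, θ = .Gv :: vs y

theorem VTh.step {L : Cst n α → Prop}
    (hL : ∀ c r, L c → TStep u v c .tau r → Led L r) {θ θ' : List (Cst n α)} (h : VTh L θ)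
    (hs : ThStep u v θ .tau θ') : VTh L θ' := by
  rcases h with h | ⟨y, rfl⟩
  · exact .inl (h.step hL hs)
  · obtain ⟨c, γ, r, he, hc, rfl⟩ := hs
    obtain ⟨rfl, rfl⟩ : .Gv = c ∧ vs y = γ := by simpa using he
    cases hc with
    | gvT i => exact .inr ⟨i :: y, rfl⟩
    | gvE => exact .inl (.inl (dat_vs y))

/-- States in mode `m` all of whose threads satisfy `VTh L`. -/
def VSt (L : Cst n α → Prop) (m : Mode) (s : Cfg n α) : Prop := ∃ p, All (VTh L) p ∧ s = (m, p)

theorem VSt.star {L : Cst n α → Prop} {m : Mode}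
    (hL : ∀ c r, L c → TStep u v c .tau r → Led L r)
    (hm : ∀ m' q, MStep m .tau m' q → m' = m ∧ All (VTh L) q) {s s' : Cfg n α}
    (h : VSt L m s) (hs : CStar u v s s') : VSt L m s' := by
  induction hs with
  | refl => exact h
  | tail _ hs ih =>
    obtain ⟨p, hp, rfl⟩ := ih
    rcases hs.cases with ⟨m', q, hq, rfl⟩ | ⟨p', hp', rfl⟩
    · obtain ⟨rfl, hq'⟩ := hm _ _ hq
      exact ⟨_, hp.add hq', rfl⟩
    · obtain ⟨p₀, θ, θ', h1, h2, h3, rfl⟩ := hp.step hp'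
      exact ⟨_, h1.add (.tm (h2.step hL h3)), rfl⟩

/-- The constants other than `Gv` that may lead a thread reachable silently from `D ‖ Gv`, or
in mode `C` after `λ_D`. -/
def L₁ (c : Cst n α) : Prop := c = .Gu ∨ c = .Gv' ∨ c = .Z ∨ c = .G

theorem L₁.step (c : Cst n α) (r) (hc : L₁ c) (h : TStep u v c .tau r) : Led L₁ r := by
  rcases hc with rfl | rfl | rfl | rfl <;> cases h <;> simp [Led, Dat, L₁]

theorem L₁.mode {m m' : Mode} {q} (hm : m = .D ∨ m = .C)
    (h : MStep (n := n) (α := α) m .tau m' q) : m' = m ∧ All (VTh L₁) q := by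
  rcases hm with rfl | rfl <;> cases h <;> refine ⟨rfl, ?_⟩
  · exact All.tm (θ := [.Gu]) (.inl (.inr ⟨.Gu, [], by simp [L₁]⟩))
  · exact All.tm (θ := [.G]) (.inl (.inr ⟨.G, [], by simp [L₁]⟩))
  · exact All.tm (θ := [.Gv]) (.inr ⟨[], rfl⟩)

/-- Like `L₁`, without the constants that can silently become `Z`. -/
def L₂ (c : Cst n α) : Prop := c = .G

theorem L₂.step (c : Cst n α) (r) (hc : L₂ c) (h : TStep u v c .tau r) : Led L₂ r := by
  obtain rfl := hc
  cases h <;> simp [Led, Dat, L₂]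

theorem L₂.mode {m' : Mode} {q} (h : MStep (n := n) (α := α) .C .tau m' q) :
    m' = .C ∧ All (VTh L₂) q := by
  cases h <;> refine ⟨rfl, ?_⟩
  · exact All.tm (θ := [.G]) (.inl (.inr ⟨.G, [], by simp [L₂]⟩))
  · exact All.tm (θ := [.Gv]) (.inr ⟨[], rfl⟩)

theorem VTh.noZ {θ : List (Cst n α)} (h : VTh L₂ θ) : NoZ θ := by
  rcases h with (h | ⟨c, γ, rfl, hc, hγ⟩) | ⟨y, rfl⟩
  · exact .inl h
  · exact .inr ⟨c, γ, rfl, .inr hc, hγ⟩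
  · exact .inr ⟨_, _, rfl, .inl rfl, dat_vs y⟩

/-- A state weakly bisimilar to one that cannot reach `λ_Z` has no constant that can silently
become `Z`. -/
theorem VSt.restrict {s t : Cfg n α} (ht : VSt L₁ .C t) (hs : Lost .C s) (h : CWk u v s t) :
    VSt L₂ .C t := by
  obtain ⟨p, hp, rfl⟩ := ht
  refine ⟨p, fun θ hθ => ⟨(hp θ hθ).1, ?_⟩, rfl⟩
  rcases (hp θ hθ).2 with (h1 | ⟨c, γ, rfl, hc, hγ⟩) | h1
  · exact .inl (.inl h1)
  · by_cases hG : c = .G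
    · exact .inl (.inr ⟨c, γ, rfl, hG, hγ⟩)
    · have hZ : ThStar u v [c] [.Z] := by
        rcases hc with rfl | rfl | rfl | rfl
        · exact TStep.guGv'.thStar.trans TStep.gv'Z.thStar
        · exact TStep.gv'Z.thStar
        · exact .refl
        · exact (hG rfl).elim
      obtain ⟨p₀, rfl⟩ := exists_add_of_mem hθ
      obtain ⟨s', h2, h3⟩ := h.symm.star ((hZ.append γ).cStar .C p₀)
      exact ((hs.star Calm.C h2).not_wk Calm.C ((TStep.zZ.thStep γ).cStep .C p₀) h3).elim
  · exact .inr h1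

/-- The answer to `λ_V` leaves exactly one `Z`, in front of a sequence of `V`s. -/
theorem VSt.step_lV {s s' : Cfg n α} (h : VSt L₂ .C s) (hs : CStep u v s .lV s') :
    ∃ y, HasZ .C (vs y) s' := by
  obtain ⟨p, hp, rfl⟩ := h
  rcases hs.cases with ⟨m', q, hq, rfl⟩ | ⟨p', hp', rfl⟩
  · cases hq
  · obtain ⟨p₀, θ, θ', h1, h2, ⟨c, γ, r, rfl, hc, rfl⟩, rfl⟩ := hp.step hp'
    cases hc
    obtain ⟨y, rfl⟩ : ∃ y, γ = vs y := by
      rcases h2 with (h2 | ⟨c, γ', h2, h3, -⟩) | ⟨y, h2⟩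
      · exact (h2 .Gv (by simp)).elim
      · obtain ⟨rfl, -⟩ : .Gv = c ∧ γ = γ' := by simpa using h2
        cases h3
      · exact ⟨y, by simpa using h2⟩
    exact ⟨y, p₀, fun θ hθ => ⟨(h1 θ hθ).1, (h1 θ hθ).2.noZ⟩, rfl⟩

/-- After the labels `λ_U λ_D λ_V`, the left process holds `Z V_x U_w` and the right one
`Z V_y`; equality of the index words and of the letter words makes `w` a solution. -/
theorem exists_good (h : CWk u v (.X, 0) (.Y, 0)) : ∃ w, w ≠ [] ∧ Good u v w := by
  obtain ⟨x, w, hw, t, ht, hst⟩ := exists_Gv h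
  refine ⟨w, hw, ?_⟩
  have hD : CStep u v (.D, tm (.Gv :: (vs x ++ us w))) .lD (.C, tm (.Gv :: (vs x ++ us w))) := by
    simpa using MStep.dD.cStep (u := u) (v := v) (tm (.Gv :: (vs x ++ us w)))
  obtain ⟨t₁, t₂, t₃, h1, h2, h3, h4⟩ := hst.step hD (by simp)
  have h5 : VSt L₁ .D t₁ := by
    refine VSt.star L₁.step (fun _ _ => L₁.mode (.inl rfl)) ⟨_, ?_, rfl⟩ (ht.trans h1)
    exact .tm (.inr ⟨[], rfl⟩)
  have h6 : VSt L₁ .C t₂ := by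
    obtain ⟨p, hp, rfl⟩ := h5
    rcases h2.cases with ⟨m', q, hq, rfl⟩ | ⟨p', ⟨p₀, _, _, -, ⟨c, γ, r, -, hc, -⟩, -⟩, -⟩
    · cases hq
      exact ⟨p, hp, by simp⟩
    · cases hc
  have hlost : Lost .C (.C, tm (.Gv :: (vs (α := α) x ++ us w))) :=
    ⟨_, .tm (.inr ⟨_, _, rfl, .inl rfl, dat_vs_us x w⟩), rfl⟩
  have h7 : VSt L₂ .C t₃ :=
    (h6.star L₁.step (fun _ _ => L₁.mode (.inr rfl)) h3).restrict hlost h4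
  obtain ⟨t₄, t₅, t₆, h8, h9, h10, h11⟩ :=
    h4.step ((TStep.gvV.thStep (vs x ++ us w)).single .C) (by simp)
  obtain ⟨y, hy⟩ := (h7.star L₂.step (fun _ _ => L₂.mode) h8).step_lV h9
  have hZ : HasZ .C (vs y) t₆ := (hy.star Calm.C (dat_vs y) h10).resolve_right
    fun hl => hl.not_wk Calm.C (Z_single _ _) h11
  have e1 := (obsI u v).word_eq_of_C (dat_vs_us x w) (dat_vs y) hZ h11
  have e2 := (obsS u v).word_eq_of_C (dat_vs_us x w) (dat_vs y) hZ h11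
  rw [Obs.word_append, obsI_vs, obsI_us, obsI_vs] at e1
  rw [Obs.word_append, obsS_vs, obsS_us, obsS_vs] at e2
  subst e2
  rw [List.flatMap_append] at e1
  exact List.append_cancel_left e1

theorem represents_X : Represents (K (.X : Cst n α)) (.X, 0) := by
  simp [Represents, K, Den, Mode.den]

theorem represents_Y : Represents (K (.Y : Cst n α)) (.Y, 0) := by
  simp [Represents, K, Den, Mode.den]

theorem HasSolution.brBisim (h : HasSolution u v) :
    BrBisim (GTrans u v) Lab.tau (K Cst.X) (K Cst.Y) := by
  obtain ⟨w, hw, hs⟩ := h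
  have hg : Good u v w := by simpa [Good, List.flatMap_def] using hs
  exact BrBisim.transfer (tr := GTrans u v) (tr' := CStep u v) (B := Represents)
    (fun _ _ _ _ hP h => hP.cstep h) (fun _ _ _ _ hP h => h.gtrans hP) (hg.br_XY hw)
    represents_X represents_Y

theorem HasSolution.of_wkBisim (h : WkBisim (GTrans u v) Lab.tau (K Cst.X) (K Cst.Y)) :
    HasSolution u v := by
  obtain ⟨w, hw, hg⟩ := exists_good (WkBisim.transfer (tr := GTrans u v)
    (tr' := CStep u v) (B := Represents) (fun _ _ _ _ hP h => hP.cstep h)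
    (fun _ _ _ _ hP h => h.gtrans hP) h represents_X represents_Y)
  exact ⟨w, hw, by simpa [Good, List.flatMap_def] using hg⟩

end Solution

/-- The main reduction (equation (1) of the paper): the PCP instance has a
solution iff `X ≃ Y`, iff `X ≈ Y`; consequently for every relation `R` with
`≃ ⊆ R ⊆ ≈`, `X R Y` iff the instance has a solution. -/
theorem pcp_reduction {n : ℕ} {α : Type} [Fintype α]
    (u v : Fin n → List α) (hu : ∀ i, u i ≠ []) (hv : ∀ i, v i ≠ []) :
    (HasSolution u v ↔ BrBisim (GTrans u v) Lab.tau (K Cst.X) (K Cst.Y)) ∧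
    (HasSolution u v ↔ WkBisim (GTrans u v) Lab.tau (K Cst.X) (K Cst.Y)) ∧
    (∀ R : Proc n α → Proc n α → Prop,
      (∀ P Q, BrBisim (GTrans u v) Lab.tau P Q → R P Q) →
      (∀ P Q, R P Q → WkBisim (GTrans u v) Lab.tau P Q) →
      (R (K Cst.X) (K Cst.Y) ↔ HasSolution u v)) := by
  have h1 : HasSolution u v → BrBisim (GTrans u v) Lab.tau (K Cst.X) (K Cst.Y) :=
    HasSolution.brBisim
  have h2 : WkBisim (GTrans u v) Lab.tau (K Cst.X) (K Cst.Y) → HasSolution u v :=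
    HasSolution.of_wkBisim
  exact ⟨⟨h1, fun h => h2 h.wkBisim⟩, ⟨fun h => (h1 h).wkBisim, h2⟩,
    fun R hR hR' => ⟨fun h => h2 (hR' _ _ h), fun h => hR _ _ (h1 h)⟩⟩
end

section
/- In the process algebra 𝒢 built from a PCP instance INST: if C‖Zℙ_v¹ ≈ C‖Zℙ_v²ℙ_u² for some sequential compositions ℙ_v¹, ℙ_v² of V-constants and ℙ_u² of U-constants with ℙ_u² ≠ ε, then INST has a solution. -/
namespace WeakCheck

open scoped List

variable {n : ℕ} {α : Type}

/-! ### Structural congruence and transitions -/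

/-- All constants occurring in the process satisfy `A`. -/
def Only (A : Cst n α → Prop) : Proc n α → Prop
  | .nil => True
  | .cst c => A c
  | .seq P Q => Only A P ∧ Only A Q
  | .par P Q => Only A P ∧ Only A Q

/-- The process is built from `ε` alone. -/
abbrev Null (P : Proc n α) : Prop := Only (fun _ => False) P

lemma only_sc {A : Cst n α → Prop} {P Q : Proc n α} (h : SC P Q) : Only A P ↔ Only A Q := by
  induction h <;> simp_all [Only] <;> tauto

/-- The raw transitions completed by the rule that in `P Q` the component `Q` may move when `P` is
built from `ε` alone.  Unlike `Step`, this relation is compatible with structural congruence. -/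
def Step2 (u v : Fin n → List α) : Proc n α → Lab n α → Proc n α → Prop
  | .nil, _, _ => False
  | .cst c, ℓ, R => Step u v (.cst c) ℓ R
  | .seq P Q, ℓ, R => (∃ P', Step2 u v P ℓ P' ∧ R = .seq P' Q) ∨
      (Null P ∧ ∃ Q', Step2 u v Q ℓ Q' ∧ R = .seq P Q')
  | .par P Q, ℓ, R => (∃ P', Step2 u v P ℓ P' ∧ R = .par P' Q) ∨
      (∃ Q', Step2 u v Q ℓ Q' ∧ R = .par P Q')

lemma step2_of_step {u v : Fin n → List α} {P ℓ P'} (h : Step u v P ℓ P') : Step2 u v P ℓ P' := by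
  induction h with
  | seqL Q _ ih => exact .inl ⟨_, ih, rfl⟩
  | parL Q _ ih => exact .inl ⟨_, ih, rfl⟩
  | parR P _ ih => exact .inr ⟨_, ih, rfl⟩
  | _ => simp only [K, Step2]; constructor

/-- Structural congruence is a strong bisimulation for `Step2`. -/
lemma sc_bisim {u v : Fin n → List α} {P Q : Proc n α} (h : SC P Q) :
    (∀ ℓ P', Step2 u v P ℓ P' → ∃ Q', Step2 u v Q ℓ Q' ∧ SC P' Q') ∧
    (∀ ℓ Q', Step2 u v Q ℓ Q' → ∃ P', Step2 u v P ℓ P' ∧ SC P' Q') := by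
  induction h with
  | refl P => exact ⟨fun _ _ h => ⟨_, h, .refl _⟩, fun _ _ h => ⟨_, h, .refl _⟩⟩
  | symm _ ih =>
    refine ⟨fun ℓ R h => ?_, fun ℓ R h => ?_⟩
    · obtain ⟨R', h', e⟩ := ih.2 _ _ h; exact ⟨R', h', e.symm⟩
    · obtain ⟨R', h', e⟩ := ih.1 _ _ h; exact ⟨R', h', e.symm⟩
  | trans _ _ ih₁ ih₂ =>
    refine ⟨fun ℓ R h => ?_, fun ℓ R h => ?_⟩
    · obtain ⟨R', h', e⟩ := ih₁.1 _ _ h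
      obtain ⟨R'', h'', e'⟩ := ih₂.1 _ _ h'
      exact ⟨R'', h'', e.trans e'⟩
    · obtain ⟨R', h', e⟩ := ih₂.2 _ _ h
      obtain ⟨R'', h'', e'⟩ := ih₁.2 _ _ h'
      exact ⟨R'', h'', e'.trans e⟩
  | seqCong hP hQ ihP ihQ =>
    constructor
    · rintro ℓ R (⟨P', h, rfl⟩ | ⟨hn, Q', h, rfl⟩)
      · obtain ⟨R', h', e⟩ := ihP.1 _ _ h
        exact ⟨_, .inl ⟨_, h', rfl⟩, .seqCong e hQ⟩
      · obtain ⟨R', h', e⟩ := ihQ.1 _ _ h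
        exact ⟨_, .inr ⟨(only_sc hP).1 hn, _, h', rfl⟩, .seqCong hP e⟩
    · rintro ℓ R (⟨P', h, rfl⟩ | ⟨hn, Q', h, rfl⟩)
      · obtain ⟨R', h', e⟩ := ihP.2 _ _ h
        exact ⟨_, .inl ⟨_, h', rfl⟩, .seqCong e hQ⟩
      · obtain ⟨R', h', e⟩ := ihQ.2 _ _ h
        exact ⟨_, .inr ⟨(only_sc hP).2 hn, _, h', rfl⟩, .seqCong hP e⟩
  | parCong hP hQ ihP ihQ =>
    constructor
    · rintro ℓ R (⟨P', h, rfl⟩ | ⟨Q', h, rfl⟩)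
      · obtain ⟨R', h', e⟩ := ihP.1 _ _ h
        exact ⟨_, .inl ⟨_, h', rfl⟩, .parCong e hQ⟩
      · obtain ⟨R', h', e⟩ := ihQ.1 _ _ h
        exact ⟨_, .inr ⟨_, h', rfl⟩, .parCong hP e⟩
    · rintro ℓ R (⟨P', h, rfl⟩ | ⟨Q', h, rfl⟩)
      · obtain ⟨R', h', e⟩ := ihP.2 _ _ h
        exact ⟨_, .inl ⟨_, h', rfl⟩, .parCong e hQ⟩
      · obtain ⟨R', h', e⟩ := ihQ.2 _ _ h
        exact ⟨_, .inr ⟨_, h', rfl⟩, .parCong hP e⟩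
  | seqAssoc P Q R =>
    constructor
    · rintro ℓ T (⟨_, ⟨P', h, rfl⟩ | ⟨hn, Q', h, rfl⟩, rfl⟩ | ⟨hn, R', h, rfl⟩)
      · exact ⟨_, .inl ⟨_, h, rfl⟩, .seqAssoc _ _ _⟩
      · exact ⟨_, .inr ⟨hn, _, .inl ⟨_, h, rfl⟩, rfl⟩, .seqAssoc _ _ _⟩
      · exact ⟨_, .inr ⟨hn.1, _, .inr ⟨hn.2, _, h, rfl⟩, rfl⟩, .seqAssoc _ _ _⟩
    · rintro ℓ T (⟨P', h, rfl⟩ | ⟨hn, _, ⟨Q', h, rfl⟩ | ⟨hn', R', h, rfl⟩, rfl⟩)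
      · exact ⟨_, .inl ⟨_, .inl ⟨_, h, rfl⟩, rfl⟩, .seqAssoc _ _ _⟩
      · exact ⟨_, .inl ⟨_, .inr ⟨hn, _, h, rfl⟩, rfl⟩, .seqAssoc _ _ _⟩
      · exact ⟨_, .inr ⟨⟨hn, hn'⟩, _, h, rfl⟩, .seqAssoc _ _ _⟩
  | parAssoc P Q R =>
    constructor
    · rintro ℓ T (⟨_, ⟨P', h, rfl⟩ | ⟨Q', h, rfl⟩, rfl⟩ | ⟨R', h, rfl⟩)
      · exact ⟨_, .inl ⟨_, h, rfl⟩, .parAssoc _ _ _⟩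
      · exact ⟨_, .inr ⟨_, .inl ⟨_, h, rfl⟩, rfl⟩, .parAssoc _ _ _⟩
      · exact ⟨_, .inr ⟨_, .inr ⟨_, h, rfl⟩, rfl⟩, .parAssoc _ _ _⟩
    · rintro ℓ T (⟨P', h, rfl⟩ | ⟨_, ⟨Q', h, rfl⟩ | ⟨R', h, rfl⟩, rfl⟩)
      · exact ⟨_, .inl ⟨_, .inl ⟨_, h, rfl⟩, rfl⟩, .parAssoc _ _ _⟩
      · exact ⟨_, .inl ⟨_, .inr ⟨_, h, rfl⟩, rfl⟩, .parAssoc _ _ _⟩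
      · exact ⟨_, .inr ⟨_, h, rfl⟩, .parAssoc _ _ _⟩
  | parComm P Q =>
    constructor
    · rintro ℓ T (⟨P', h, rfl⟩ | ⟨Q', h, rfl⟩)
      · exact ⟨_, .inr ⟨_, h, rfl⟩, .parComm _ _⟩
      · exact ⟨_, .inl ⟨_, h, rfl⟩, .parComm _ _⟩
    · rintro ℓ T (⟨P', h, rfl⟩ | ⟨Q', h, rfl⟩)
      · exact ⟨_, .inr ⟨_, h, rfl⟩, .parComm _ _⟩
      · exact ⟨_, .inl ⟨_, h, rfl⟩, .parComm _ _⟩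
  | seqNilL P =>
    constructor
    · rintro ℓ T (⟨P', h, rfl⟩ | ⟨-, Q', h, rfl⟩)
      · exact h.elim
      · exact ⟨_, h, .seqNilL _⟩
    · exact fun ℓ T h => ⟨_, .inr ⟨trivial, _, h, rfl⟩, .seqNilL _⟩
  | seqNilR P =>
    constructor
    · rintro ℓ T (⟨P', h, rfl⟩ | ⟨-, Q', h, rfl⟩)
      · exact ⟨_, h, .seqNilR _⟩
      · exact h.elim
    · exact fun ℓ T h => ⟨_, .inl ⟨_, h, rfl⟩, .seqNilR _⟩
  | parNil P =>
    constructor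
    · rintro ℓ T (⟨P', h, rfl⟩ | ⟨Q', h, rfl⟩)
      · exact h.elim
      · exact ⟨_, h, .parNil _⟩
    · exact fun ℓ T h => ⟨_, .inr ⟨_, h, rfl⟩, .parNil _⟩

/-- A transition of a process can be read off from any structurally congruent representative. -/
lemma exists_step2 {u v : Fin n → List α} {P Q P' : Proc n α} {ℓ} (hPQ : SC P Q)
    (h : GTrans u v P ℓ P') : ∃ Q', Step2 u v Q ℓ Q' ∧ SC Q' P' := by
  obtain ⟨P₁, P₂, h₁, h₂, h₃⟩ := h
  obtain ⟨Q', h', e⟩ := (sc_bisim (hPQ.symm.trans h₁)).2 _ _ (step2_of_step h₂)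
  exact ⟨Q', h', e.trans h₃⟩

lemma gtrans_of_step {u v : Fin n → List α} {P ℓ P'} (h : Step u v P ℓ P') : GTrans u v P ℓ P' :=
  ⟨_, _, .refl _, h, .refl _⟩

lemma gtrans_seq {u v : Fin n → List α} {P ℓ P'} (Q) (h : GTrans u v P ℓ P') :
    GTrans u v (.seq P Q) ℓ (.seq P' Q) := by
  obtain ⟨P₁, P₂, h₁, h₂, h₃⟩ := h
  exact ⟨_, _, .seqCong h₁ (.refl _), .seqL Q h₂, .seqCong h₃ (.refl _)⟩

lemma gtrans_par {u v : Fin n → List α} {P ℓ P'} (Q) (h : GTrans u v P ℓ P') :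
    GTrans u v (.par P Q) ℓ (.par P' Q) := by
  obtain ⟨P₁, P₂, h₁, h₂, h₃⟩ := h
  exact ⟨_, _, .parCong h₁ (.refl _), .parL Q h₂, .parCong h₃ (.refl _)⟩

/-! ### Weak traces -/

/-- `Run u v P w Q`: the process `P` reaches `Q` performing the sequence `w` of visible labels,
interleaved with silent steps. -/
inductive Run (u v : Fin n → List α) : Proc n α → List (Lab n α) → Proc n α → Prop
  | nil (P) : Run u v P [] P
  | tau {P P' w Q} : GTrans u v P .tau P' → Run u v P' w Q → Run u v P w Q
  | vis {P P' ℓ w Q} : ℓ ≠ .tau → GTrans u v P ℓ P' → Run u v P' w Q → Run u v P (ℓ :: w) Q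

/-- `w` is a weak trace of `P`. -/
def Can (u v : Fin n → List α) (P : Proc n α) (w : List (Lab n α)) : Prop := ∃ Q, Run u v P w Q

variable {u v : Fin n → List α}

lemma Run.append {P w Q w' R} (h : Run u v P w Q) (h' : Run u v Q w' R) :
    Run u v P (w ++ w') R := by
  induction h with
  | nil => exact h'
  | tau h₁ _ ih => exact .tau h₁ (ih h')
  | vis hℓ h₁ _ ih => exact .vis hℓ h₁ (ih h')

lemma Run.seq {P w P'} (Q) (h : Run u v P w P') : Run u v (.seq P Q) w (.seq P' Q) := by
  induction h with
  | nil => exact .nil _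
  | tau h₁ _ ih => exact .tau (gtrans_seq _ h₁) ih
  | vis hℓ h₁ _ ih => exact .vis hℓ (gtrans_seq _ h₁) ih

lemma Run.par {P w P'} (Q) (h : Run u v P w P') : Run u v (.par P Q) w (.par P' Q) := by
  induction h with
  | nil => exact .nil _
  | tau h₁ _ ih => exact .tau (gtrans_par _ h₁) ih
  | vis hℓ h₁ _ ih => exact .vis hℓ (gtrans_par _ h₁) ih

lemma Can.par {P w} (Q) (h : Can u v P w) : Can u v (.par P Q) w := by
  obtain ⟨P', h⟩ := h
  exact ⟨_, h.par Q⟩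

lemma Can.of_sc {P Q w} (e : SC P Q) (h : Can u v Q w) : Can u v P w := by
  obtain ⟨R, h⟩ := h
  cases h with
  | nil => exact ⟨_, .nil _⟩
  | tau h₁ h₂ =>
    obtain ⟨P₁, P₂, a, b, c⟩ := h₁
    exact ⟨_, .tau ⟨P₁, P₂, e.trans a, b, c⟩ h₂⟩
  | vis hℓ h₁ h₂ =>
    obtain ⟨P₁, P₂, a, b, c⟩ := h₁
    exact ⟨_, .vis hℓ ⟨P₁, P₂, e.trans a, b, c⟩ h₂⟩

lemma run_of_silent {P Q} (h : SilentStar (GTrans u v) .tau P Q) : Run u v P [] Q := by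
  induction h using Relation.ReflTransGen.head_induction_on with
  | refl => exact .nil _
  | head h _ ih => exact .tau h ih

/-- Weakly bisimilar processes have the same weak traces. -/
lemma Can.transport {R} (hR : IsWeakBisim (GTrans u v) .tau R) {P Q w} (hPQ : R P Q)
    (h : Can u v P w) : Can u v Q w := by
  obtain ⟨P', h⟩ := h
  induction h generalizing Q with
  | nil => exact ⟨_, .nil _⟩
  | tau h₁ _ ih =>
    obtain ⟨Q', hs, hr⟩ := (hR _ _ hPQ).1 _ _ h₁
    obtain ⟨Q'', hq⟩ := ih hr
    rcases hs with ⟨-, hs⟩ | ⟨hs, -⟩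
    · exact ⟨_, (run_of_silent hs).append hq⟩
    · exact absurd rfl hs
  | vis hℓ h₁ _ ih =>
    obtain ⟨Q', hs, hr⟩ := (hR _ _ hPQ).1 _ _ h₁
    obtain ⟨Q'', hq⟩ := ih hr
    rcases hs with ⟨hs, -⟩ | ⟨-, Q₁, Q₂, s₁, s₂, s₃⟩
    · exact absurd hs hℓ
    · exact ⟨_, (run_of_silent s₁).append (.vis hℓ s₂ ((run_of_silent s₃).append hq))⟩

/-! ### The two checks and the words they observe -/

/-- The test started by a check: `I` for `true`, which observes letters, and `S` for `false`, which
observes indices. -/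
def test : Bool → Cst n α
  | true => .I
  | false => .S

/-- The label with which `C` turns into the test. -/
def start : Bool → Lab n α
  | true => .lI
  | false => .lS

/-- The labels relevant for a check: `λ_Z`, and the letters or the indices. -/
def Relevant : Bool → Lab n α → Prop
  | _, .lZ => True
  | true, .ltr _ => True
  | false, .idx _ => True
  | _, _ => False

/-- The word of relevant labels emitted by a constant when nothing is skipped.  It is `none` for
the constants that do not occur after the start of the test in the absence of spawned
processes. -/
def obsC (u v : Fin n → List α) : Bool → Cst n α → Option (List (Lab n α))
  | _, .Z => some [.lZ]
  | true, .I => some []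
  | false, .S => some []
  | true, .U i => some ((u i).map .ltr)
  | true, .V i => some ((v i).map .ltr)
  | true, .W ω _ => some (ω.map .ltr)
  | false, .U i => some [.idx i]
  | false, .V i => some [.idx i]
  | false, .W _ k => some (k.toList.map .idx)
  | _, _ => none

/-- Concatenation of partial words. -/
def seqO {β : Type} : Option (List β) → Option (List β) → Option (List β)
  | some x, some y => some (x ++ y)
  | _, _ => none

/-- The combination of partial words for parallel composition, defined only when at most one of the
words is nonempty, so that there is nothing to interleave. -/
def parO {β : Type} : Option (List β) → Option (List β) → Option (List β)
  | some [], y => y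
  | some (a :: x), some [] => some (a :: x)
  | none, some [] => none
  | _, _ => none

/-- The word of relevant labels emitted by a process when nothing is skipped, where defined. -/
def obs (u v : Fin n → List α) (b : Bool) : Proc n α → Option (List (Lab n α))
  | .nil => some []
  | .cst c => obsC u v b c
  | .seq P Q => seqO (obs u v b P) (obs u v b Q)
  | .par P Q => parO (obs u v b P) (obs u v b Q)

lemma seqO_eq_some {β : Type} {x y : Option (List β)} {z} :
    seqO x y = some z ↔ ∃ a b, x = some a ∧ y = some b ∧ z = a ++ b := by
  rcases x with _ | x <;> rcases y with _ | y <;> simp [seqO, eq_comm]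

lemma parO_eq_some {β : Type} {x y : Option (List β)} {z} :
    parO x y = some z ↔ (x = some [] ∧ y = some z) ∨ (x = some z ∧ y = some []) := by
  rcases x with _ | _ | ⟨a, x⟩ <;> rcases y with _ | _ | ⟨b, y⟩ <;> simp [parO]

lemma obs_sc {b : Bool} {P Q : Proc n α} (h : SC P Q) : obs u v b P = obs u v b Q := by
  induction h with
  | refl => rfl
  | symm _ ih => exact ih.symm
  | trans _ _ ih₁ ih₂ => exact ih₁.trans ih₂
  | seqCong _ _ ih₁ ih₂ => simp only [obs, ih₁, ih₂]
  | parCong _ _ ih₁ ih₂ => simp only [obs, ih₁, ih₂]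
  | seqAssoc P Q R =>
    simp only [obs]
    generalize obs u v b P = x
    generalize obs u v b Q = y
    generalize obs u v b R = z
    rcases x with _ | x <;> rcases y with _ | y <;> rcases z with _ | z <;> simp [seqO]
  | parAssoc P Q R =>
    simp only [obs]
    generalize obs u v b P = x
    generalize obs u v b Q = y
    generalize obs u v b R = z
    rcases x with _ | _ | ⟨_, x⟩ <;> rcases y with _ | _ | ⟨_, y⟩ <;>
      rcases z with _ | _ | ⟨_, z⟩ <;> simp [parO]
  | parComm P Q =>
    simp only [obs]
    generalize obs u v b P = x
    generalize obs u v b Q = y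
    rcases x with _ | _ | ⟨_, x⟩ <;> rcases y with _ | _ | ⟨_, y⟩ <;> simp [parO]
  | seqNilL P => simp only [obs]; rcases obs u v b P with _ | x <;> simp [seqO]
  | seqNilR P => simp only [obs]; rcases obs u v b P with _ | x <;> simp [seqO]
  | parNil P => simp [obs, parO]

/-- A silent or relevant step removes a subword, starting with the label performed. -/
lemma obs_step {b : Bool} {P P' : Proc n α} {ℓ} (h : Step u v P ℓ P') :
    ∀ {x}, obs u v b P = some x →
    (ℓ = .tau → ∃ x', obs u v b P' = some x' ∧ x' <+ x) ∧
    (Relevant b ℓ → ∃ x', obs u v b P' = some x' ∧ ℓ :: x' <+ x) := by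
  induction h with
  | seqL Q _ ih =>
    intro x hx
    obtain ⟨y, z, hy, hz, rfl⟩ := seqO_eq_some.1 hx
    refine ⟨fun hℓ => ?_, fun hℓ => ?_⟩
    · obtain ⟨y', h₁, h₂⟩ := (ih hy).1 hℓ
      exact ⟨_, seqO_eq_some.2 ⟨_, _, h₁, hz, rfl⟩, h₂.append_right z⟩
    · obtain ⟨y', h₁, h₂⟩ := (ih hy).2 hℓ
      exact ⟨_, seqO_eq_some.2 ⟨_, _, h₁, hz, rfl⟩, h₂.append_right z⟩
  | parL Q _ ih =>
    intro x hx
    rcases parO_eq_some.1 hx with ⟨hy, hz⟩ | ⟨hy, hz⟩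
    · refine ⟨fun hℓ => ?_, fun hℓ => ?_⟩
      · obtain ⟨y', h₁, h₂⟩ := (ih hy).1 hℓ
        obtain rfl := List.sublist_nil.1 h₂
        exact ⟨_, parO_eq_some.2 (.inl ⟨h₁, hz⟩), .refl _⟩
      · obtain ⟨y', h₁, h₂⟩ := (ih hy).2 hℓ
        simp at h₂
    · refine ⟨fun hℓ => ?_, fun hℓ => ?_⟩
      · obtain ⟨y', h₁, h₂⟩ := (ih hy).1 hℓ
        exact ⟨_, parO_eq_some.2 (.inr ⟨h₁, hz⟩), h₂⟩
      · obtain ⟨y', h₁, h₂⟩ := (ih hy).2 hℓ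
        exact ⟨_, parO_eq_some.2 (.inr ⟨h₁, hz⟩), h₂⟩
  | parR P _ ih =>
    intro x hx
    rcases parO_eq_some.1 hx with ⟨hz, hy⟩ | ⟨hz, hy⟩
    · refine ⟨fun hℓ => ?_, fun hℓ => ?_⟩
      · obtain ⟨y', h₁, h₂⟩ := (ih hy).1 hℓ
        exact ⟨_, parO_eq_some.2 (.inl ⟨hz, h₁⟩), h₂⟩
      · obtain ⟨y', h₁, h₂⟩ := (ih hy).2 hℓ
        exact ⟨_, parO_eq_some.2 (.inl ⟨hz, h₁⟩), h₂⟩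
    · refine ⟨fun hℓ => ?_, fun hℓ => ?_⟩
      · obtain ⟨y', h₁, h₂⟩ := (ih hy).1 hℓ
        obtain rfl := List.sublist_nil.1 h₂
        exact ⟨_, parO_eq_some.2 (.inr ⟨hz, h₁⟩), .refl _⟩
      · obtain ⟨y', h₁, h₂⟩ := (ih hy).2 hℓ
        simp at h₂
  | wTa a ω k =>
    intro x hx
    cases b <;> simp [obs, obsC, K, Relevant] at hx ⊢ <;> subst hx
    exacts [.refl _, List.sublist_cons_self _ _]
  | _ => intro x hx; cases b <;> simp_all [obs, obsC, K, Relevant]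

/-- A weak trace of relevant labels is a scattered subword of the observed word. -/
lemma Run.sublist {b : Bool} {P w Q} (h : Run u v P w Q) {x} (hx : obs u v b P = some x)
    (hw : ∀ ℓ ∈ w, Relevant b ℓ) : w <+ x := by
  induction h generalizing x with
  | nil => exact List.nil_sublist _
  | tau h₁ _ ih =>
    obtain ⟨P₁, P₂, a, s, c⟩ := h₁
    obtain ⟨x', h₁, h₂⟩ := (obs_step s ((obs_sc a).symm.trans hx)).1 rfl
    exact (ih ((obs_sc c).symm.trans h₁) hw).trans h₂
  | vis _ h₁ _ ih =>
    obtain ⟨P₁, P₂, a, s, c⟩ := h₁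
    obtain ⟨x', h₁, h₂⟩ := (obs_step s ((obs_sc a).symm.trans hx)).2 (hw _ (by simp))
    exact ((ih ((obs_sc c).symm.trans h₁) fun ℓ hℓ => hw ℓ (by simp [hℓ])).cons_cons _).trans h₂

/-- The word observed on a sequence of `U`- and `V`-constants. -/
def word (u v : Fin n → List α) (b : Bool) (L : List (Cst n α)) : List (Lab n α) :=
  L.flatMap fun c => (obsC u v b c).getD []

lemma obs_seqComp {b : Bool} {L : List (Cst n α)} (hL : ∀ c ∈ L, IsUV c) :
    obs u v b (seqComp L) = some (word u v b L) := by
  induction L with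
  | nil => simp [seqComp, obs, word]
  | cons c L ih =>
    have h := ih fun c hc => hL c (by simp [hc])
    have hc : obsC u v b c = some ((obsC u v b c).getD []) := by
      rcases hL c (by simp) with ⟨i, rfl⟩ | ⟨i, rfl⟩ <;> cases b <;> simp [obsC]
    exact seqO_eq_some.2 ⟨_, _, hc, h, by simp [word]⟩

lemma relevant_word {b : Bool} {L : List (Cst n α)} (hL : ∀ c ∈ L, IsUV c) :
    ∀ ℓ ∈ word u v b L, Relevant b ℓ := by
  intro ℓ hℓ
  obtain ⟨c, hc, hℓ⟩ := List.mem_flatMap.1 hℓ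
  rcases hL c hc with ⟨i, rfl⟩ | ⟨i, rfl⟩ <;> cases b <;> simp [obsC] at hℓ
  · subst hℓ; trivial
  · obtain ⟨a, -, rfl⟩ := hℓ; trivial
  · subst hℓ; trivial
  · obtain ⟨a, -, rfl⟩ := hℓ; trivial

/-- `W(ω,i)` can emit all its letters, skipping the index. -/
lemma run_W_letters (ω : List α) (i : Fin n) :
    Run u v (K (.W ω (some i))) (ω.map .ltr) .nil := by
  induction ω with
  | nil =>
    exact .tau (gtrans_of_step (.wTi _ _)) (.tau (gtrans_of_step .wE) (.nil _))
  | cons a ω ih => exact .vis (by simp) (gtrans_of_step (.wA _ _ _)) ih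

/-- `W(ω,i)` can emit its index, skipping the letters. -/
lemma run_W_index (ω : List α) (i : Fin n) :
    Run u v (K (.W ω (some i))) [.idx i] .nil := by
  induction ω with
  | nil =>
    exact .vis (by simp) (gtrans_of_step (.wI _ _)) (.tau (gtrans_of_step .wE) (.nil _))
  | cons a ω ih => exact .tau (gtrans_of_step (.wTa _ _ _)) ih

lemma can_word {b : Bool} {L : List (Cst n α)} (hL : ∀ c ∈ L, IsUV c) :
    Can u v (seqComp L) (word u v b L) := by
  induction L with
  | nil => exact ⟨_, .nil _⟩
  | cons c L ih =>
    obtain ⟨Q, hQ⟩ := Can.of_sc (.seqNilL _) (ih fun c hc => hL c (by simp [hc]))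
    have hc : Run u v (K c) ((obsC u v b c).getD []) .nil := by
      rcases hL c (by simp) with ⟨i, rfl⟩ | ⟨i, rfl⟩ <;> cases b
      · exact .tau (gtrans_of_step (.uW i)) (run_W_index _ _)
      · exact .tau (gtrans_of_step (.uW i)) (run_W_letters _ _)
      · exact .tau (gtrans_of_step (.vW i)) (run_W_index _ _)
      · exact .tau (gtrans_of_step (.vW i)) (run_W_letters _ _)
    exact ⟨Q, (hc.seq _).append hQ⟩

/-! ### Persistence of the marker `Z` -/

/-- The constants that occur in addition to the thread with `Z` before a check is started. -/
def Before : Cst n α → Prop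
  | .C | .G | .Gv | .U _ | .V _ | .W _ _ => True
  | _ => False

/-- The constants that occur in addition to the thread with `Z` after a check is started. -/
def After : Cst n α → Prop
  | .C | .G | .Gv | .U _ | .V _ | .W _ _ | .I | .S => True
  | _ => False

lemma Only.mono {A B : Cst n α → Prop} (h : ∀ c, A c → B c) {P : Proc n α} (hP : Only A P) :
    Only B P := by
  induction P with
  | nil => trivial
  | cst c => exact h c hP
  | seq P Q ih₁ ih₂ => exact ⟨ih₁ hP.1, ih₂ hP.2⟩
  | par P Q ih₁ ih₂ => exact ⟨ih₁ hP.1, ih₂ hP.2⟩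

/-- If the constants in `A` evolve under `ℓ` into processes over `B ⊇ A`, so do all processes
over `A`. -/
lemma only_step2 {A B : Cst n α → Prop} {ℓ : Lab n α} (hAB : ∀ c, A c → B c)
    (hs : ∀ c P', A c → Step u v (.cst c) ℓ P' → Only B P') {P P' : Proc n α}
    (hP : Only A P) (h : Step2 u v P ℓ P') : Only B P' := by
  induction P generalizing P' with
  | nil => exact h.elim
  | cst c => exact hs c P' hP h
  | seq P Q ih₁ ih₂ =>
    rcases h with ⟨R, h, rfl⟩ | ⟨-, R, h, rfl⟩
    · exact ⟨ih₁ hP.1 h, hP.2.mono hAB⟩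
    · exact ⟨hP.1.mono hAB, ih₂ hP.2 h⟩
  | par P Q ih₁ ih₂ =>
    rcases h with ⟨R, h, rfl⟩ | ⟨R, h, rfl⟩
    · exact ⟨ih₁ hP.1 h, hP.2.mono hAB⟩
    · exact ⟨hP.1.mono hAB, ih₂ hP.2 h⟩

lemma before_tau (c : Cst n α) (P') (hc : Before c) (h : Step u v (.cst c) .tau P') :
    Only Before P' := by
  cases c <;> simp only [Before] at hc <;> cases h <;> simp [Only, K, Before]

lemma after_tau (c : Cst n α) (P') (hc : After c) (h : Step u v (.cst c) .tau P') :
    Only After P' := by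
  cases c <;> simp only [After] at hc <;> cases h <;> simp [Only, K, After]

lemma before_start (b : Bool) (c : Cst n α) (P') (hc : Before c)
    (h : Step u v (.cst c) (start b) P') : Only After P' := by
  cases b <;> cases c <;> simp only [Before] at hc <;> cases h <;> simp [Only, K, After]

lemma after_lZ (c : Cst n α) (P') (hc : After c) : ¬ Step u v (.cst c) .lZ P' := by
  intro h
  cases c <;> simp only [After] at hc <;> cases h

lemma before_le_after (c : Cst n α) (h : Before c) : After c := by
  cases c <;> simp_all [Before, After]

/-- The process `P` still contains the thread `Z ℙ` intact, next to constants in `A`, or consists of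
constants in `A` only. -/
def Marked (A : Cst n α → Prop) (L : List (Cst n α)) (P : Proc n α) : Prop :=
  (∃ g, SC P (.par (.seq (K .Z) (seqComp L)) g) ∧ Only A g) ∨ Only A P

lemma Marked.step {A B : Cst n α → Prop} {ℓ : Lab n α} (hAB : ∀ c, A c → B c)
    (hs : ∀ c P', A c → Step u v (.cst c) ℓ P' → Only B P') (hℓ : ℓ ≠ .lZ)
    {L : List (Cst n α)} (hL : Only B (seqComp L)) {P P' : Proc n α}
    (hP : Marked A L P) (h : GTrans u v P ℓ P') : Marked B L P' := by
  rcases hP with ⟨g, e, hg⟩ | hP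
  · obtain ⟨Q', h', e'⟩ := exists_step2 e h
    rcases h' with ⟨_, ⟨R, h', rfl⟩ | ⟨hn, -⟩, rfl⟩ | ⟨g', h', rfl⟩
    · cases h' with
      | zE => exact .inr ((only_sc e').1 ⟨⟨trivial, hL⟩, hg.mono hAB⟩)
      | zZ => exact absurd rfl hℓ
    · exact hn.elim
    · exact .inl ⟨g', e'.symm, only_step2 hAB hs hg h'⟩
  · obtain ⟨Q', h', e'⟩ := exists_step2 (.refl _) h
    exact .inr ((only_sc e').1 (only_step2 hAB hs hP h'))

lemma Marked.silent {A : Cst n α → Prop}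
    (hs : ∀ c P', A c → Step u v (.cst c) .tau P' → Only A P')
    {L : List (Cst n α)} (hL : Only A (seqComp L)) {P P' : Proc n α}
    (hP : Marked A L P) (h : SilentStar (GTrans u v) .tau P P') : Marked A L P' := by
  induction h with
  | refl => exact hP
  | tail _ h ih => exact ih.step (fun _ => id) hs (by simp) hL h

lemma only_before_seqComp {L : List (Cst n α)} (hL : ∀ c ∈ L, IsUV c) :
    Only Before (seqComp L) := by
  induction L with
  | nil => trivial
  | cons c L ih =>
    refine ⟨?_, ih fun c hc => hL c (by simp [hc])⟩
    rcases hL c (by simp) with ⟨i, rfl⟩ | ⟨i, rfl⟩ <;> trivial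

lemma not_can_lZ {P : Proc n α} (hP : Only After P) : ¬ Can u v P [.lZ] := by
  rintro ⟨Q, h⟩
  generalize hw : [Lab.lZ] = w at h
  induction h with
  | nil => simp at hw
  | tau h _ ih =>
    obtain ⟨Q', h', e'⟩ := exists_step2 (.refl _) h
    exact ih ((only_sc e').1 (only_step2 (fun _ => id) after_tau hP h')) hw
  | vis _ h _ _ =>
    obtain ⟨rfl, -⟩ := List.cons.inj hw
    obtain ⟨Q', h', -⟩ := exists_step2 (.refl _) h
    have hstep : ∀ {R R' : Proc n α}, Only After R → ¬ Step2 u v R .lZ R' := by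
      intro R R' hR hs
      induction R generalizing R' with
      | nil => exact hs.elim
      | cst c => exact after_lZ c R' hR hs
      | seq R₁ R₂ ih₁ ih₂ =>
        rcases hs with ⟨_, hs, -⟩ | ⟨-, _, hs, -⟩
        exacts [ih₁ hR.1 hs, ih₂ hR.2 hs]
      | par R₁ R₂ ih₁ ih₂ =>
        rcases hs with ⟨_, hs, -⟩ | ⟨_, hs, -⟩
        exacts [ih₁ hR.1 hs, ih₂ hR.2 hs]
    exact absurd h' (hstep hP)

/-- If after the start of a check the process `C ‖ Z ℙ` can still perform `λ_Z`, then the thread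
`Z ℙ` is intact. -/
lemma reach_after_check {b : Bool} {L : List (Cst n α)} (hL : ∀ c ∈ L, IsUV c) {Q : Proc n α}
    (h : WeakStep (GTrans u v) .tau (start b) (.par (K .C) (.seq (K .Z) (seqComp L))) Q)
    (hQ : Can u v Q [.lZ]) : ∃ g, SC Q (.par (.seq (K .Z) (seqComp L)) g) := by
  have hb := only_before_seqComp hL
  have ha := hb.mono before_le_after
  rcases h with ⟨h, -⟩ | ⟨-, Q₁, Q₂, h₁, h₂, h₃⟩
  · cases b <;> simp [start] at h
  · have m₀ : Marked Before L (.par (K .C) (.seq (K .Z) (seqComp L))) :=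
      .inl ⟨K .C, .parComm _ _, trivial⟩
    have m₁ := m₀.silent before_tau hb h₁
    have m₂ := m₁.step before_le_after (before_start b) (by cases b <;> simp [start]) ha h₂
    rcases m₂.silent after_tau ha h₃ with ⟨g, e, -⟩ | hO
    · exact ⟨g, e⟩
    · exact absurd hQ (not_can_lZ hO)

/-! ### Comparison of the words -/

/-- Bisimilarity of `C ‖ Z ℙ` and `C ‖ Z ℙ'` makes the word of `ℙ'` a scattered subword of that of
`ℙ`, for either check. -/
lemma word_sublist (b : Bool) {L L' : List (Cst n α)} (hL : ∀ c ∈ L, IsUV c)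
    (hL' : ∀ c ∈ L', IsUV c)
    (h : WkBisim (GTrans u v) .tau (.par (K .C) (.seq (K .Z) (seqComp L)))
      (.par (K .C) (.seq (K .Z) (seqComp L')))) :
    word u v b L' <+ word u v b L := by
  obtain ⟨R, hR, hPQ⟩ := h
  -- The converse of a weak bisimulation is one, so traces are also carried from right to left.
  have hR' : IsWeakBisim (GTrans u v) .tau (fun P Q => R Q P) :=
    fun P Q hPQ => ⟨(hR Q P hPQ).2, (hR Q P hPQ).1⟩
  have hC : Step u v (K .C) (start b) (K (test b)) := by cases b <;> constructor
  obtain ⟨Q, hQ, hRQ⟩ := (hR _ _ hPQ).1 _ _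
    (gtrans_par (.seq (K .Z) (seqComp L)) (gtrans_of_step hC))
  have hZ : ∀ L'' : List (Cst n α), GTrans u v (.seq (K .Z) (seqComp L'')) .lZ
      (.seq .nil (seqComp L'')) := fun _ => gtrans_seq _ (gtrans_of_step .zZ)
  have hcan : Can u v Q [.lZ] := by
    exact Can.transport hR hRQ (Can.of_sc (.parComm _ _)
      (Can.par _ ⟨_, .vis (by simp) (hZ L) (.nil _)⟩))
  obtain ⟨g, e⟩ := reach_after_check hL' hQ hcan
  have hcan' : Can u v Q (.lZ :: word u v b L') := by
    obtain ⟨T, hT⟩ := Can.of_sc (.seqNilL _) (can_word (u := u) (v := v) (b := b) hL')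
    exact Can.of_sc e (Can.par g ⟨T, .vis (by simp) (hZ L') hT⟩)
  obtain ⟨T, hT⟩ := Can.transport hR' hRQ hcan'
  have hobs : obs u v b (.par (K (test b)) (.seq (K .Z) (seqComp L))) =
      some (.lZ :: word u v b L) := by
    refine parO_eq_some.2 (.inl ⟨by cases b <;> rfl, seqO_eq_some.2
      ⟨[.lZ], _, by cases b <;> rfl, obs_seqComp hL, rfl⟩⟩)
  have hsub := hT.sublist hobs (by
    rintro ℓ hℓ
    rcases List.mem_cons.1 hℓ with rfl | hℓ
    · cases b <;> trivial
    · exact relevant_word hL' ℓ hℓ)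
  simpa using hsub

lemma WkBisim.symm' {P Q : Proc n α} (h : WkBisim (GTrans u v) .tau P Q) :
    WkBisim (GTrans u v) .tau Q P := by
  obtain ⟨R, hR, hPQ⟩ := h
  exact ⟨fun P Q => R Q P, fun P Q hPQ => ⟨(hR Q P hPQ).2, (hR Q P hPQ).1⟩, hPQ⟩

lemma word_append (b : Bool) (L L' : List (Cst n α)) :
    word u v b (L ++ L') = word u v b L ++ word u v b L' := by
  simp [word]

lemma word_true_V (l : List (Fin n)) :
    word u v true (l.map fun i => Cst.V i) = ((l.map v).flatten).map .ltr := by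
  induction l with
  | nil => rfl
  | cons i l ih => simp_all [word, obsC]

lemma word_true_U (l : List (Fin n)) :
    word u v true (l.map fun i => Cst.U i) = ((l.map u).flatten).map .ltr := by
  induction l with
  | nil => rfl
  | cons i l ih => simp_all [word, obsC]

lemma word_false_V (l : List (Fin n)) :
    word u v false (l.map fun i => Cst.V i) = l.map .idx := by
  induction l with
  | nil => rfl
  | cons i l ih => simp_all [word, obsC]

lemma word_false_U (l : List (Fin n)) :
    word u v false (l.map fun i => Cst.U i) = l.map .idx := by
  induction l with
  | nil => rfl
  | cons i l ih => simp_all [word, obsC]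

end WeakCheck

/-- Lemma 10 of the paper: if `C‖Zℙ_v¹ ≈ C‖Zℙ_v²ℙ_u²` with `ℙ_u² ≠ ε`, then the
PCP instance has a solution. -/
theorem weak_check_variant {n : ℕ} {α : Type} [Fintype α]
    (u v : Fin n → List α) (hu : ∀ i, u i ≠ []) (hv : ∀ i, v i ≠ [])
    (lv1 lv2 lu2 : List (Fin n)) (hne : lu2 ≠ [])
    (h : WkBisim (GTrans u v) Lab.tau
      (.par (K .C) (.seq (K .Z) (seqComp (lv1.map fun i => Cst.V i))))
      (.par (K .C) (.seq (K .Z)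
        (seqComp ((lv2.map fun i => Cst.V i) ++ (lu2.map fun i => Cst.U i)))))) :
    HasSolution u v := by
  have hL1 : ∀ c ∈ lv1.map (fun i => (Cst.V i : Cst n α)), IsUV c := by
    intro c hc
    obtain ⟨i, -, rfl⟩ := List.mem_map.1 hc
    exact .inr ⟨i, rfl⟩
  have hL2 : ∀ c ∈ lv2.map (fun i => (Cst.V i : Cst n α)) ++ lu2.map (fun i => Cst.U i),
      IsUV c := by
    intro c hc
    rcases List.mem_append.1 hc with hc | hc <;> obtain ⟨i, -, rfl⟩ := List.mem_map.1 hc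
    exacts [.inr ⟨i, rfl⟩, .inl ⟨i, rfl⟩]
  have key (b : Bool) := (WeakCheck.word_sublist b hL2 hL1 (WeakCheck.WkBisim.symm' h)).antisymm
    (WeakCheck.word_sublist b hL1 hL2 h)
  have hidx := key false
  have hltr := key true
  rw [WeakCheck.word_append, WeakCheck.word_false_V, WeakCheck.word_false_V,
    WeakCheck.word_false_U, ← List.map_append] at hidx
  rw [WeakCheck.word_append, WeakCheck.word_true_V, WeakCheck.word_true_V,
    WeakCheck.word_true_U, ← List.map_append] at hltr
  have hidx := List.map_injective_iff.2 (fun i j hij => by injection hij) hidx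
  have hltr := List.map_injective_iff.2 (fun i j hij => by injection hij) hltr
  subst hidx
  refine ⟨lu2, hne, ?_⟩
  simpa using hltr.symm
end
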